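/- arXiv:2510.24925 — 4 statements merged into one kernel-verified Lean document; each statement's English description precedes it below -/
import Mathlib

section
/- Let g : ℕ → ℝ → ℝ be a sequence of functions such that for every j ∈ ℕ, g_j(t) ≥ 0 for all t ≥ 0, and g_j is differentiable on [0,∞) with g_j′(t) = −2·g_{j+1}(t) for all t ≥ 0. Then for every integer k ≥ 1 and every T > 0, g_k(T) ≤ (k/(2T))^k · g_0(0). -/
/-- Iterated energy-decay mechanism: if each `g j` is nonnegative on `[0,∞)` and
`(g j)' = -2 g (j+1)` on `[0,∞)`, then `g k T ≤ (k/(2T))^k · g 0 0` for every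
integer `k ≥ 1` and every `T > 0`. -/
theorem iterated_energy_decay
    (g : ℕ → ℝ → ℝ)
    (h_nonneg : ∀ j : ℕ, ∀ t ≥ (0 : ℝ), 0 ≤ g j t)
    (hderiv : ∀ j : ℕ, ∀ t ∈ Set.Ici (0 : ℝ),
      HasDerivWithinAt (g j) (-2 * g (j + 1) t) (Set.Ici 0) t) :
    ∀ k : ℕ, 1 ≤ k → ∀ T > (0 : ℝ),
      g k T ≤ ((k : ℝ) / (2 * T)) ^ k * g 0 0 := by
  have hcont : ∀ j, ContinuousOn (g j) (Set.Ici 0) := fun j t ht =>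
    (hderiv j t ht).continuousWithinAt
  have hd : ∀ j, ∀ t > (0 : ℝ), HasDerivAt (g j) (-2 * g (j + 1) t) t := fun j t ht =>
    (hderiv j t ht.le).hasDerivAt (Ici_mem_nhds ht)
  have hmvt : ∀ j, ∀ a b : ℝ, 0 ≤ a → a < b →
      ∃ c ∈ Set.Ioo a b, -2 * g (j + 1) c * (b - a) = g j b - g j a := by
    intro j a b ha hab
    obtain ⟨c, hc, h⟩ := exists_hasDerivAt_eq_slope (g j) (fun t => -2 * g (j + 1) t) hab
      ((hcont j).mono fun x hx => ha.trans hx.1) (fun x hx => hd j x (ha.trans_lt hx.1))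
    refine ⟨c, hc, ?_⟩
    have : b - a ≠ 0 := (sub_pos.2 hab).ne'
    rw [eq_div_iff this] at h
    exact h
  have hanti : ∀ j, ∀ a b : ℝ, 0 ≤ a → a < b → g j b ≤ g j a := by
    intro j a b ha hab
    obtain ⟨c, hc, h⟩ := hmvt j a b ha hab
    have := mul_nonneg (h_nonneg (j + 1) c (ha.trans hc.1.le)) (sub_pos.2 hab).le
    linarith
  have hstep : ∀ j, ∀ a b : ℝ, 0 ≤ a → a < b → g (j + 1) b * (2 * (b - a)) ≤ g j a := by
    intro j a b ha hab
    obtain ⟨c, hc, h⟩ := hmvt j a b ha hab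
    have h1 := hanti (j + 1) c b (ha.trans hc.1.le) hc.2
    have h2 := h_nonneg j b (ha.trans hab.le)
    have h3 := mul_le_mul_of_nonneg_right h1 (sub_pos.2 hab).le
    linarith
  intro k hk T hT
  have hk0 : (0 : ℝ) < k := by exact_mod_cast hk
  have key : ∀ m : ℕ, g m (m * (T / k)) ≤ ((k : ℝ) / (2 * T)) ^ m * g 0 0 := by
    intro m
    induction m with
    | zero => simp
    | succ m ih =>
      have hh : 0 < T / k := by positivity
      have h := hstep m (m * (T / k)) ((m + 1 : ℕ) * (T / k)) (by positivity)
        (by push_cast; linarith)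
      have e : 2 * (((m + 1 : ℕ) : ℝ) * (T / k) - m * (T / k)) = 2 * T / k := by
        push_cast; ring
      rw [e] at h
      have h2 := mul_le_mul_of_nonneg_left (h.trans ih)
        (by positivity : (0 : ℝ) ≤ (k : ℝ) / (2 * T))
      calc _ = (k : ℝ) / (2 * T) * (g (m + 1) ((m + 1 : ℕ) * (T / k)) * (2 * T / k)) := by
            field_simp
        _ ≤ _ := h2
        _ = _ := by rw [pow_succ]; ring
  have := key k
  rwa [mul_div_cancel₀ T hk0.ne'] at this
end

section
/- Let L : ℝ^d → ℝ be infinitely differentiable, σ > 0, π(w) = e^{−L(w)/σ}, and let φ₀ : ℝ^d → ℝ be measurable with φ₀ > 0 and ∫ φ₀² dπ < ∞. Then there exists a function φ : (0,∞) × ℝ^d → ℝ, jointly infinitely differentiable and nonnegative, such that: (i) ∂_t φ(t,w) = σ·Δ_w φ(t,w) − ⟨∇L(w), ∇_w φ(t,w)⟩ for all t > 0 and w ∈ ℝ^d; (ii) ∫ φ(t,·)² dπ ≤ ∫ φ₀² dπ for all t > 0; (iii) ∫ ‖∇φ(t,·)‖² dπ ≤ (1/(2σt)) ∫ φ₀²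 dπ for all t > 0; (iv) for every integer m ≥ 1 and all t > 0, ∫ (𝔏^m φ(t,·))² dπ ≤ (m/t)^{2m} ∫ φ₀² dπ and ∫ ‖∇(𝔏^m φ(t,·))‖² dπ ≤ σ^{−1}·((2m+1)/(2t))^{2m+1} ∫ φ₀² dπ, where 𝔏^m denotes the m-fold iterate of 𝔏g = σΔg − ⟨∇L, ∇g⟩; and (v) the initial datum is attained in the sense that for every smooth compactly supported ψ : ℝ^d → ℝ, ∫ φ(t,·)·ψ dπ → ∫ φ₀·ψ dπ as t → 0⁺. -/
open MeasureTheory Filter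
open scoped RealInnerProductSpace Topology

/-- The Laplacian of `f : ℝ^d → ℝ`: the sum of second derivatives along the standard
orthonormal basis, `Δf(w) = ∑ i, ∂²f/∂wᵢ²(w)`. -/
noncomputable def laplacian {d : ℕ} (f : EuclideanSpace ℝ (Fin d) → ℝ)
    (w : EuclideanSpace ℝ (Fin d)) : ℝ :=
  ∑ i : Fin d,
    fderiv ℝ (fun v => fderiv ℝ f v (EuclideanSpace.single i (1 : ℝ))) w
      (EuclideanSpace.single i (1 : ℝ))

/-- The generator of the overdamped Langevin dynamics, `𝔏g = σΔg - ⟨∇L, ∇g⟩`. -/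
noncomputable def generator {d : ℕ} (σ : ℝ) (L : EuclideanSpace ℝ (Fin d) → ℝ)
    (g : EuclideanSpace ℝ (Fin d) → ℝ) : EuclideanSpace ℝ (Fin d) → ℝ :=
  fun w => σ * laplacian g w - ⟪gradient L w, gradient g w⟫

namespace FP

/-- The spectral functions `λ^m e^{-tλ}` in the variable `x = 1/(1+λ)`. -/
noncomputable def hf (m : ℕ) (t x : ℝ) : ℝ :=
  if x = 0 then 0 else (x⁻¹ - 1) ^ m * Real.exp (-(t * (x⁻¹ - 1)))

lemma hf_zero (m : ℕ) (t : ℝ) : hf m t 0 = 0 := by simp [hf]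

lemma hf_of_ne {x : ℝ} (hx : x ≠ 0) (m : ℕ) (t : ℝ) :
    hf m t x = (x⁻¹ - 1) ^ m * Real.exp (-(t * (x⁻¹ - 1))) := by simp [hf, hx]

lemma lam_nonneg {x : ℝ} (hx : x ∈ Set.Icc (0 : ℝ) 1) (h0 : x ≠ 0) : 0 ≤ x⁻¹ - 1 := by
  have : 0 < x := lt_of_le_of_ne hx.1 (Ne.symm h0)
  have := (one_le_inv₀ this).2 hx.2
  linarith

lemma pow_mul_exp_le (m : ℕ) {t l : ℝ} (ht : 0 < t) (hl : 0 ≤ l) :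
    l ^ m * Real.exp (-(t * l)) ≤ ((m : ℝ) / t) ^ m := by
  rcases Nat.eq_zero_or_pos m with rfl | hm
  · simp; positivity
  have hm' : (0 : ℝ) < m := by exact_mod_cast hm
  have h1 : l * Real.exp (-(t * l / m)) ≤ m / t := by
    have h2 := Real.add_one_le_exp (t * l / m)
    rw [Real.exp_neg, ← div_eq_mul_inv, div_le_iff₀ (Real.exp_pos _)]
    have : l = m / t * (t * l / m) := by field_simp
    calc l = m / t * (t * l / m) := this
      _ ≤ m / t * Real.exp (t * l / m) := by gcongr; linarith
  calc l ^ m * Real.exp (-(t * l)) = (l * Real.exp (-(t * l / m))) ^ m := by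
        rw [mul_pow, ← Real.exp_nat_mul]; congr 2; field_simp
    _ ≤ _ := by gcongr

lemma hf_nonneg {x : ℝ} (hx : x ∈ Set.Icc (0 : ℝ) 1) (m : ℕ) (t : ℝ) : 0 ≤ hf m t x := by
  by_cases h0 : x = 0
  · simp [h0, hf_zero]
  · rw [hf_of_ne h0]
    have := lam_nonneg hx h0
    positivity

lemma hf_le {x : ℝ} (hx : x ∈ Set.Icc (0 : ℝ) 1) (m : ℕ) {t : ℝ} (ht : 0 < t) :
    hf m t x ≤ ((m : ℝ) / t) ^ m := by
  by_cases h0 : x = 0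
  · simp only [h0, hf_zero]; positivity
  · rw [hf_of_ne h0]
    exact pow_mul_exp_le m ht (lam_nonneg hx h0)

lemma hf_mul_le {x : ℝ} (hx : x ∈ Set.Icc (0 : ℝ) 1) (m : ℕ) {t : ℝ} (ht : 0 < t) :
    hf m t x * hf (m + 1) t x ≤ ((2 * (m : ℝ) + 1) / (2 * t)) ^ (2 * m + 1) := by
  by_cases h0 : x = 0
  · simp only [h0, hf_zero, mul_zero]; positivity
  · rw [hf_of_ne h0, hf_of_ne h0]
    have := pow_mul_exp_le (2 * m + 1) (t := 2 * t) (by positivity) (lam_nonneg hx h0)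
    push_cast at this
    refine le_trans (le_of_eq ?_) this
    have e : Real.exp (-(2 * t * (x⁻¹ - 1))) =
      Real.exp (-(t * (x⁻¹ - 1))) * Real.exp (-(t * (x⁻¹ - 1))) := by
      rw [← Real.exp_add]; congr 1; ring
    rw [e]; ring

lemma hf_rec {x : ℝ} (m : ℕ) (t : ℝ) :
    hf m t x = x * (hf m t x + hf (m + 1) t x) := by
  by_cases h0 : x = 0
  · simp [h0, hf_zero]
  · rw [hf_of_ne h0, hf_of_ne h0]
    have h3 : x * x⁻¹ = 1 := by field_simp
    linear_combination (-(x⁻¹ - 1) ^ m * Real.exp (-(t * (x⁻¹ - 1)))) * h3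

lemma hf_contOn (m : ℕ) {t : ℝ} (ht : 0 < t) : ContinuousOn (hf m t) (Set.Icc (0 : ℝ) 1) := by
  intro x hx
  by_cases h0 : x = 0
  · subst h0
    -- squeeze
    have hb : ∀ y ∈ Set.Icc (0 : ℝ) 1,
        hf m t y ≤ y * (((m : ℝ) / t) ^ m + (((m + 1 : ℕ) : ℝ) / t) ^ (m + 1)) := by
      intro y hy
      rw [hf_rec]
      have h1 := hf_le hy m ht
      have h2 := hf_le hy (m + 1) ht
      have := hy.1
      gcongr
    unfold ContinuousWithinAt
    rw [hf_zero]
    have hlim : Tendsto (fun y : ℝ => y * (((m : ℝ) / t) ^ m + (((m + 1 : ℕ) : ℝ) / t) ^ (m + 1)))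
        (𝓝[Set.Icc 0 1] 0) (𝓝 0) := by
      have : Continuous (fun y : ℝ => y * (((m : ℝ) / t) ^ m + (((m + 1 : ℕ) : ℝ) / t) ^ (m + 1))) := by
        fun_prop
      have h := this.tendsto 0
      simp only [zero_mul] at h
      exact h.mono_left nhdsWithin_le_nhds
    refine tendsto_of_tendsto_of_tendsto_of_le_of_le' tendsto_const_nhds hlim ?_ ?_
    · filter_upwards [self_mem_nhdsWithin] with y hy using hf_nonneg hy m t
    · filter_upwards [self_mem_nhdsWithin] with y hy using hb y hy
  · have : ContinuousAt (fun x : ℝ => (x⁻¹ - 1) ^ m * Real.exp (-(t * (x⁻¹ - 1)))) x := by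
      have : ContinuousAt (fun x : ℝ => x⁻¹) x := continuousAt_inv₀ h0
      fun_prop
    refine (this.congr ?_).continuousWithinAt
    filter_upwards [isOpen_ne.mem_nhds h0] with y hy
    exact (hf_of_ne hy m t).symm

lemma exp_taylor_aux (z : ℝ) : |Real.exp z - 1 - z| ≤ z ^ 2 * Real.exp |z| := by
  have h := Complex.norm_exp_sub_sum_le_norm_mul_exp (z : ℂ) 2
  simp only [Finset.sum_range_succ, Finset.sum_range_zero] at h
  have e : Complex.exp z - (0 + (z : ℂ) ^ 0 / (Nat.factorial 0 : ℂ) +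
      (z : ℂ) ^ 1 / (Nat.factorial 1 : ℂ)) = ((Real.exp z - 1 - z : ℝ) : ℂ) := by
    push_cast; simp; ring
  rw [e, Complex.norm_real, Complex.norm_real, Real.norm_eq_abs, Real.norm_eq_abs, sq_abs] at h
  exact h

lemma hf_deriv_bound {x : ℝ} (hx : x ∈ Set.Icc (0 : ℝ) 1) (m : ℕ) {t s : ℝ} (ht : 0 < t)
    (hs : |s - t| ≤ t / 2) :
    |hf m s x - hf m t x + (s - t) * hf (m + 1) t x| ≤
      (((m + 2 : ℕ) : ℝ) / (t / 2)) ^ (m + 2) * (s - t) ^ 2 := by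
  by_cases h0 : x = 0
  · simp only [h0, hf_zero, sub_zero, mul_zero, add_zero, abs_zero]; positivity
  · rw [hf_of_ne h0, hf_of_ne h0, hf_of_ne h0]
    have hl := lam_nonneg hx h0
    set l := x⁻¹ - 1
    have e1 : l ^ m * Real.exp (-(s * l)) - l ^ m * Real.exp (-(t * l)) +
        (s - t) * (l ^ (m + 1) * Real.exp (-(t * l))) =
        l ^ m * Real.exp (-(t * l)) * (Real.exp (-((s - t) * l)) - 1 - (-((s - t) * l))) := by
      have : Real.exp (-(s * l)) = Real.exp (-(t * l)) * Real.exp (-((s - t) * l)) := by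
        rw [← Real.exp_add]; congr 1; ring
      rw [this]; ring
    rw [e1, abs_mul, abs_of_nonneg (by positivity : 0 ≤ l ^ m * Real.exp (-(t * l)))]
    calc _ ≤ l ^ m * Real.exp (-(t * l)) * ((-((s - t) * l)) ^ 2 * Real.exp |-((s - t) * l)|) := by
            gcongr; exact exp_taylor_aux _
      _ ≤ l ^ m * Real.exp (-(t * l)) * ((-((s - t) * l)) ^ 2 * Real.exp (t / 2 * l)) := by
            gcongr
            rw [abs_neg, abs_mul, abs_of_nonneg hl]
            gcongr
      _ = l ^ (m + 2) * Real.exp (-(t / 2 * l)) * (s - t) ^ 2 := by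
            have : Real.exp (-(t / 2 * l)) = Real.exp (-(t * l)) * Real.exp (t / 2 * l) := by
              rw [← Real.exp_add]; congr 1; ring
            rw [this]; ring
      _ ≤ _ := by
            gcongr
            exact pow_mul_exp_le (m + 2) (by positivity) hl

lemma hf_init {x : ℝ} (hx : x ∈ Set.Icc (0 : ℝ) 1) {t : ℝ} (ht : 0 < t) :
    |hf 0 t x * x - x| ≤ t := by
  by_cases h0 : x = 0
  · simp [h0, hf_zero, ht.le]
  · rw [hf_of_ne h0]
    have hl := lam_nonneg hx h0
    have hx0 : 0 < x := lt_of_le_of_ne hx.1 (Ne.symm h0)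
    have h1 := Real.add_one_le_exp (-(t * (x⁻¹ - 1)))
    have h2 : Real.exp (-(t * (x⁻¹ - 1))) ≤ 1 := by
      rw [Real.exp_le_one_iff]; nlinarith
    have h3 : x * x⁻¹ = 1 := by field_simp
    simp only [pow_zero, one_mul]
    rw [abs_le]
    constructor
    · have : x * (1 - Real.exp (-(t * (x⁻¹ - 1)))) ≤ x * (t * (x⁻¹ - 1)) := by
        gcongr; linarith
      have h4 : x * (t * (x⁻¹ - 1)) = t - t * x := by
        linear_combination t * h3
      nlinarith
    · nlinarith

/-- resolvent function of `(1+sA)⁻¹`. -/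
noncomputable def rf (s x : ℝ) : ℝ := x / (x + s * (1 - x))
noncomputable def kf (s x : ℝ) : ℝ := 1 / (x + s * (1 - x))

lemma den_pos {x s : ℝ} (hx : x ∈ Set.Icc (0 : ℝ) 1) (hs : 0 < s) : 0 < x + s * (1 - x) := by
  obtain ⟨h0, h1⟩ := hx
  rcases h0.eq_or_lt with h | h
  · rw [← h]; simpa using hs
  · have : 0 ≤ s * (1 - x) := mul_nonneg hs.le (by linarith)
    linarith

lemma rf_contOn {s : ℝ} (hs : 0 < s) : ContinuousOn (rf s) (Set.Icc (0 : ℝ) 1) := by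
  unfold rf
  exact ContinuousOn.div (by fun_prop) (by fun_prop) fun x hx => (den_pos hx hs).ne'

lemma kf_contOn {s : ℝ} (hs : 0 < s) : ContinuousOn (kf s) (Set.Icc (0 : ℝ) 1) := by
  unfold kf
  exact ContinuousOn.div (by fun_prop) (by fun_prop) fun x hx => (den_pos hx hs).ne'

lemma pow_sub_pow_le {a b : ℝ} (ha : 0 ≤ a) (ha1 : a ≤ 1) (hb : 0 ≤ b) (hb1 : b ≤ 1) (n : ℕ) :
    |a ^ n - b ^ n| ≤ n * |a - b| := by
  induction n with
  | zero => simp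
  | succ n ih =>
    have e : a ^ (n + 1) - b ^ (n + 1) = a * (a ^ n - b ^ n) + (a - b) * b ^ n := by ring
    rw [e]
    calc |a * (a ^ n - b ^ n) + (a - b) * b ^ n| ≤ |a * (a ^ n - b ^ n)| + |(a - b) * b ^ n| :=
          abs_add_le _ _
      _ = a * |a ^ n - b ^ n| + |a - b| * b ^ n := by
          rw [abs_mul, abs_mul, abs_of_nonneg ha, abs_of_nonneg (pow_nonneg hb n)]
      _ ≤ 1 * |a ^ n - b ^ n| + |a - b| * 1 := by
          gcongr; exact pow_le_one₀ hb hb1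
      _ ≤ _ := by push_cast; linarith

lemma rf_approx {t : ℝ} (ht : 0 < t) {ε : ℝ} (hε : 0 < ε) :
    ∃ n : ℕ, 0 < n ∧ ∀ x ∈ Set.Icc (0 : ℝ) 1, |rf (t / n) x ^ n - hf 0 t x| ≤ ε := by
  -- cut-off level
  set Λ : ℝ := 2 / (ε * t) with hΛ
  have hΛ0 : 0 < Λ := by positivity
  obtain ⟨n, hn⟩ := exists_nat_gt ((t * Λ) ^ 2 / ε)
  have hn0 : (0 : ℝ) < n := lt_of_le_of_lt (by positivity) hn
  refine ⟨n, by exact_mod_cast hn0, ?_⟩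
  intro x hx
  by_cases h0 : x = 0
  · have : n ≠ 0 := by rintro rfl; simp at hn0
    simp [h0, hf_zero, rf, this, hε.le]
  · have hl := lam_nonneg hx h0
    have hx0 : 0 < x := lt_of_le_of_ne hx.1 (Ne.symm h0)
    rw [hf_of_ne h0]
    set l := x⁻¹ - 1 with hl_def
    set s := t / n with hs
    have hs0 : 0 < s := by positivity
    have hr : rf s x = (1 + s * l)⁻¹ := by
      unfold rf
      have h1 : x + s * (1 - x) = x * (1 + s * l) := by
        rw [hl_def]; field_simp
      rw [h1]
      have : 0 < 1 + s * l := by positivity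
      field_simp
    have hsl : 0 ≤ s * l := by positivity
    have hb : Real.exp (-(t * l)) = Real.exp (-(s * l)) ^ n := by
      rw [← Real.exp_nat_mul]; congr 1; rw [hs]; field_simp
    have ha1 : (1 + s * l)⁻¹ ≤ 1 := inv_le_one_of_one_le₀ (by linarith)
    have hb1 : Real.exp (-(s * l)) ≤ 1 := by rw [Real.exp_le_one_iff]; linarith
    have hba : Real.exp (-(s * l)) ≤ (1 + s * l)⁻¹ := by
      rw [Real.exp_neg]
      gcongr
      linarith [Real.add_one_le_exp (s * l)]
    simp only [pow_zero, one_mul]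
    rw [hr, hb]
    by_cases hc : l ≤ Λ
    · refine (pow_sub_pow_le (by positivity) ha1 (by positivity) hb1 n).trans ?_
      have h1 : |(1 + s * l)⁻¹ - Real.exp (-(s * l))| ≤ (s * l) ^ 2 := by
        rw [abs_of_nonneg (by linarith)]
        have h2 := Real.add_one_le_exp (-(s * l))
        have h3 : (1 + s * l)⁻¹ ≤ 1 - s * l + (s * l) ^ 2 := by
          rw [inv_le_iff_one_le_mul₀ (by positivity)]
          nlinarith [pow_nonneg hsl 3]
        linarith
      calc n * |(1 + s * l)⁻¹ - Real.exp (-(s * l))| ≤ n * (s * l) ^ 2 := by gcongr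
        _ ≤ n * (s * Λ) ^ 2 := by gcongr
        _ = (t * Λ) ^ 2 / n := by rw [hs]; field_simp
        _ ≤ ε := by
          rw [div_lt_iff₀ hε] at hn
          rw [div_le_iff₀ hn0]; linarith
    · push Not at hc
      have h1 : ((1 + s * l)⁻¹) ^ n ≤ (1 + t * l)⁻¹ := by
        rw [inv_pow]
        gcongr
        have := one_add_mul_le_pow (a := s * l) (by linarith) n
        have e : (n : ℝ) * (s * l) = t * l := by rw [hs]; field_simp
        linarith
      have h2 : Real.exp (-(s * l)) ^ n ≤ ((1 + s * l)⁻¹) ^ n := by gcongr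
      have h3 : (1 + t * l)⁻¹ ≤ ε := by
        rw [inv_le_comm₀ (by positivity) hε]
        have : t * Λ = 2 / ε := by rw [hΛ]; field_simp
        have h4 : t * Λ ≤ t * l := by gcongr
        have h5 : ε⁻¹ ≤ 2 / ε := by rw [inv_eq_one_div]; gcongr; norm_num
        linarith
      rw [abs_of_nonneg (by linarith)]
      have : 0 ≤ Real.exp (-(s * l)) ^ n := by positivity
      linarith

end FP

namespace FP

section Abstract
variable {H : Type*} [NormedAddCommGroup H] [InnerProductSpace ℂ H] [CompleteSpace H]

lemma spectrum_sub {T : H →L[ℂ] H} (hpos : T.IsPositive) (hn : ‖T‖ ≤ 1) :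
    spectrum ℝ T ⊆ Set.Icc 0 1 := by
  intro x hx
  have h0 : 0 ≤ x := by
    have := hpos.spectrumRestricts
    rw [SpectrumRestricts.nnreal_iff] at this
    exact this x hx
  refine ⟨h0, ?_⟩
  rcases subsingleton_or_nontrivial H with h | h
  · exfalso
    have : Subsingleton (H →L[ℂ] H) := inferInstance
    rw [spectrum.of_subsingleton] at hx
    exact hx
  · have := spectrum.norm_le_norm_of_mem hx
    rw [Real.norm_eq_abs, abs_of_nonneg h0] at this
    exact this.trans hn

/-- `A^m e^{-tA} f` where `T = (1+A)⁻¹`. -/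
noncomputable def Y (T : H →L[ℂ] H) (m : ℕ) (t : ℝ) (f : H) : H := cfc (hf m t) T f

variable {T : H →L[ℂ] H}

lemma norm_Y_le (hsp : spectrum ℝ T ⊆ Set.Icc 0 1)
    (m : ℕ) {t : ℝ} (ht : 0 < t) (f : H) :
    ‖Y T m t f‖ ≤ ((m : ℝ) / t) ^ m * ‖f‖ := by
  refine ((cfc (hf m t) T).le_opNorm f).trans ?_
  gcongr
  refine norm_cfc_le (by positivity) fun x hx => ?_
  rw [Real.norm_eq_abs, abs_of_nonneg (hf_nonneg (hsp hx) m t)]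
  exact hf_le (hsp hx) m ht

lemma Y_rec (hT : IsSelfAdjoint T) (hsp : spectrum ℝ T ⊆ Set.Icc 0 1)
    (m : ℕ) {t : ℝ} (ht : 0 < t) (f : H) :
    Y T m t f = T (Y T m t f + Y T (m + 1) t f) := by
  have hc := (hf_contOn m ht).mono hsp
  have hc' := (hf_contOn (m + 1) ht).mono hsp
  have h1 : cfc (hf m t) T = T * (cfc (hf m t) T + cfc (hf (m + 1) t) T) := by
    conv_rhs => rw [← cfc_add T (hf m t) (hf (m + 1) t) hc hc']
    nth_rw 2 [← cfc_id ℝ T hT]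
    rw [← cfc_mul id (fun x => hf m t x + hf (m + 1) t x) T continuousOn_id (hc.add hc')]
    refine cfc_congr fun x _ => ?_
    exact hf_rec m t
  unfold Y
  conv_lhs => rw [h1]
  simp

lemma cfc_symm (g : ℝ → ℝ) (u v : H) : inner ℂ (cfc g T u) v = inner ℂ u (cfc g T v) := by
  have h : IsSelfAdjoint (cfc g T) := IsSelfAdjoint.cfc
  exact h.isSymmetric u v

lemma inner_Y_le (hsp : spectrum ℝ T ⊆ Set.Icc 0 1)
    (m : ℕ) {t : ℝ} (ht : 0 < t) (f : H) :
    ‖inner ℂ (Y T m t f) (Y T (m + 1) t f)‖ ≤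
      ((2 * (m : ℝ) + 1) / (2 * t)) ^ (2 * m + 1) * ‖f‖ ^ 2 := by
  have hc := (hf_contOn m ht).mono hsp
  have hc' := (hf_contOn (m + 1) ht).mono hsp
  unfold Y
  rw [cfc_symm, ← mul_apply_eq_comp, ← cfc_mul _ _ T hc hc']
  have h2 : ‖cfc (fun x => hf m t x * hf (m + 1) t x) T‖ ≤
      ((2 * (m : ℝ) + 1) / (2 * t)) ^ (2 * m + 1) := by
    refine norm_cfc_le (by positivity) fun x hx => ?_
    rw [Real.norm_eq_abs, abs_of_nonneg
      (mul_nonneg (hf_nonneg (hsp hx) m t) (hf_nonneg (hsp hx) (m + 1) t))]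
    exact hf_mul_le (hsp hx) m ht
  calc _ ≤ ‖f‖ * ‖cfc (fun x => hf m t x * hf (m + 1) t x) T f‖ := norm_inner_le_norm _ _
    _ ≤ ‖f‖ * (((2 * (m : ℝ) + 1) / (2 * t)) ^ (2 * m + 1) * ‖f‖) := by
      gcongr
      exact ContinuousLinearMap.le_of_opNorm_le _ h2 f
    _ = _ := by ring

lemma Y_hasDerivAt (hsp : spectrum ℝ T ⊆ Set.Icc 0 1)
    (m : ℕ) {t : ℝ} (ht : 0 < t) (f : H) :
    HasDerivAt (fun s => Y T m s f) (-(Y T (m + 1) t f)) t := by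
  have hc := (hf_contOn m ht).mono hsp
  have hc' := (hf_contOn (m + 1) ht).mono hsp
  set C := (((m + 2 : ℕ) : ℝ) / (t / 2)) ^ (m + 2)
  have hC : 0 ≤ C := by positivity
  have key : ∀ s, |s - t| ≤ t / 2 →
      ‖Y T m s f - Y T m t f - (s - t) • (-(Y T (m + 1) t f))‖ ≤ C * ‖f‖ * (s - t) ^ 2 := by
    intro s hs
    have hs0 : 0 < s := by have := (abs_le.1 hs).1; linarith
    have hcs := (hf_contOn m hs0).mono hsp
    have e : Y T m s f - Y T m t f - (s - t) • (-(Y T (m + 1) t f)) =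
        cfc (fun x => hf m s x - hf m t x + (s - t) * hf (m + 1) t x) T f := by
      have e1 : cfc (fun x => hf m s x - hf m t x + (s - t) * hf (m + 1) t x) T =
          cfc (hf m s) T - cfc (hf m t) T + (s - t) • cfc (hf (m + 1) t) T := by
        rw [cfc_add T (fun x => hf m s x - hf m t x) (fun x => (s - t) * hf (m + 1) t x)
          (hcs.sub hc) (continuousOn_const.mul hc'), cfc_sub _ _ T hcs hc,
          cfc_const_mul _ _ T hc']
      rw [e1]
      simp [Y]
    rw [e]
    refine (ContinuousLinearMap.le_of_opNorm_le (c := C * (s - t) ^ 2) _ ?_ f).trans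
      (le_of_eq (by ring))
    refine norm_cfc_le (by positivity) fun x hx => ?_
    exact hf_deriv_bound (hsp hx) m ht hs
  rw [hasDerivAt_iff_isLittleO]
  have hO : (fun s => Y T m s f - Y T m t f - (s - t) • (-(Y T (m + 1) t f))) =O[𝓝 t]
      fun s => (s - t) ^ 2 := by
    refine Asymptotics.IsBigO.of_bound (C * ‖f‖) ?_
    have : ∀ᶠ s in 𝓝 t, |s - t| ≤ t / 2 := by
      have := Metric.closedBall_mem_nhds t (half_pos ht)
      filter_upwards [this] with s hs
      simpa [Real.dist_eq] using hs
    filter_upwards [this] with s hs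
    refine (key s hs).trans (le_of_eq ?_)
    simp
  refine hO.trans_isLittleO ?_
  have h : (fun s : ℝ => s - t) =o[𝓝 t] (fun _ => (1 : ℝ)) := by
    rw [Asymptotics.isLittleO_one_iff]
    have : Continuous fun s : ℝ => s - t := by fun_prop
    simpa using this.tendsto t
  have h2 := (Asymptotics.isBigO_refl (fun s : ℝ => s - t) (𝓝 t)).mul_isLittleO h
  simpa [sq] using h2

lemma Y_weak (hT : IsSelfAdjoint T) (hsp : spectrum ℝ T ⊆ Set.Icc 0 1)
    (m : ℕ) {t : ℝ} (ht : 0 < t) (f : H) {ψ z : H} (hz : ψ = T z) :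
    inner ℂ ψ (Y T (m + 1) t f) = inner ℂ (z - ψ) (Y T m t f) := by
  have h := Y_rec hT hsp m ht f
  have hs : ∀ u v, inner ℂ (T u) v = inner ℂ u (T v) := fun u v => hT.isSymmetric u v
  have h1 : inner ℂ z (Y T m t f) = inner ℂ ψ (Y T m t f) + inner ℂ ψ (Y T (m + 1) t f) := by
    conv_lhs => rw [h]
    rw [← hs, ← hz, inner_add_right]
  rw [inner_sub_left, h1]; ring

lemma Y_init (hT : IsSelfAdjoint T) (hsp : spectrum ℝ T ⊆ Set.Icc 0 1)
    (f : H) {ψ z : H} (hz : ψ = T z) :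
    Tendsto (fun t => inner ℂ ψ (Y T 0 t f)) (𝓝[>] (0 : ℝ)) (𝓝 (inner ℂ ψ f)) := by
  rw [tendsto_iff_norm_sub_tendsto_zero]
  have hb : ∀ t > 0, ‖inner ℂ ψ (Y T 0 t f) - inner ℂ ψ f‖ ≤ t * ‖z‖ * ‖f‖ := by
    intro t ht
    have hc := (hf_contOn 0 ht).mono hsp
    unfold Y
    rw [← cfc_symm, ← inner_sub_left, hz]
    refine (norm_inner_le_norm _ _).trans ?_
    gcongr
    have e : cfc (hf 0 t) T (T z) - T z = cfc (fun x => hf 0 t x * x - x) T z := by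
      have e1 : cfc (fun x => hf 0 t x * x - x) T = cfc (hf 0 t) T * T - T := by
        rw [cfc_sub (fun x => hf 0 t x * x) (fun x => x) T (hc.mul continuousOn_id) continuousOn_id,
          cfc_mul (hf 0 t) (fun x => x) T hc continuousOn_id, cfc_id' ℝ T hT]
      rw [e1]; simp
    rw [e]
    refine ContinuousLinearMap.le_of_opNorm_le _ ?_ z
    exact norm_cfc_le ht.le fun x hx => hf_init (hsp hx) ht
  have hl : Tendsto (fun t : ℝ => t * ‖z‖ * ‖f‖) (𝓝[>] 0) (𝓝 0) := by
    have : Continuous fun t : ℝ => t * ‖z‖ * ‖f‖ := by fun_prop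
    have h := this.tendsto 0
    simp only [zero_mul] at h
    exact h.mono_left nhdsWithin_le_nhds
  refine squeeze_zero' (Eventually.of_forall fun _ => norm_nonneg _) ?_ hl
  filter_upwards [self_mem_nhdsWithin] with t ht using hb t ht

lemma Y_mem_closed (hT : IsSelfAdjoint T) (hsp : spectrum ℝ T ⊆ Set.Icc 0 1)
    {C : Set H} (hC : IsClosed C)
    (hr : ∀ s > 0, ∀ f ∈ C, cfc (rf s) T f ∈ C) {t : ℝ} (ht : 0 < t) {f : H} (hf' : f ∈ C) :
    Y T 0 t f ∈ C := by
  have hpow : ∀ s > 0, ∀ n : ℕ, (cfc (rf s) T ^ n) f ∈ C := by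
    intro s hs n
    induction n with
    | zero => simpa using hf'
    | succ n ih =>
      rw [pow_succ', mul_apply_eq_comp]
      exact hr s hs _ ih
  rw [← hC.closure_eq, Metric.mem_closure_iff]
  intro ε hε
  obtain ⟨n, hn, hb⟩ := rf_approx ht (ε := ε / (2 * (‖f‖ + 1))) (by positivity)
  have hs : 0 < t / n := by positivity
  refine ⟨_, hpow (t / n) hs n, ?_⟩
  have hc := (hf_contOn 0 ht).mono hsp
  have hc' := (rf_contOn hs).mono hsp
  rw [dist_comm, dist_eq_norm]
  have e : (cfc (rf (t / n)) T ^ n) f - Y T 0 t f =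
      cfc (fun x => rf (t / n) x ^ n - hf 0 t x) T f := by
    rw [cfc_sub (fun x => rf (t / n) x ^ n) _ T (hc'.pow n) hc, cfc_pow _ n T hc' hT]
    simp [Y]
  rw [e]
  refine (ContinuousLinearMap.le_of_opNorm_le _
    (norm_cfc_le (by positivity) fun x hx => hb x (hsp hx)) f).trans_lt ?_
  rw [div_mul_eq_mul_div, div_lt_iff₀ (by positivity)]
  nlinarith [norm_nonneg f]

lemma resolvent_eq (hT : IsSelfAdjoint T) (hsp : spectrum ℝ T ⊆ Set.Icc 0 1)
    {s : ℝ} (hs : 0 < s) (f : H) :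
    cfc (rf s) T f = T (cfc (kf s) T f) ∧
    cfc (rf s) T f + s • (cfc (kf s) T f - cfc (rf s) T f) = f := by
  have hc := (kf_contOn hs).mono hsp
  have hc' := (rf_contOn hs).mono hsp
  have h1 : cfc (rf s) T = T * cfc (kf s) T := by
    nth_rw 2 [← cfc_id ℝ T hT]
    rw [← cfc_mul id _ T continuousOn_id hc]
    refine cfc_congr fun x _ => ?_
    simp [rf, kf, div_eq_mul_inv]
  constructor
  · conv_lhs => rw [h1]
    simp
  · have h2 : cfc (rf s) T + s • (cfc (kf s) T - cfc (rf s) T) = 1 := by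
      rw [← cfc_sub _ _ T hc hc', ← cfc_const_mul s (fun x => kf s x - rf s x) T (hc.sub hc'),
        ← cfc_add T (rf s) (fun x => s * (kf s x - rf s x)) hc' (continuousOn_const.mul (hc.sub hc')), ← cfc_one ℝ T hT]
      refine cfc_congr fun x hx => ?_
      have := den_pos (hsp hx) hs
      simp only [rf, kf]
      field_simp
      simp
    have := congrArg (fun S : H →L[ℂ] H => S f) h2
    simpa using this

end Abstract
end FP

namespace FP

abbrev Eu (d : ℕ) := EuclideanSpace ℝ (Fin d)

/-- partial derivative -/
noncomputable def pd {d : ℕ} {F : Type*} [NormedAddCommGroup F] [NormedSpace ℝ F]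
    (i : Fin d) (f : Eu d → F) (x : Eu d) : F :=
  fderiv ℝ f x (EuclideanSpace.single i (1 : ℝ))

/-- smooth functions -/
abbrev Sm {d : ℕ} {F : Type*} [NormedAddCommGroup F] [NormedSpace ℝ F] (f : Eu d → F) : Prop :=
  ContDiff ℝ (⊤ : ℕ∞) f

/-- complex valued test functions -/
structure Test {d : ℕ} (ψ : Eu d → ℂ) : Prop where
  sm : Sm ψ
  cs : HasCompactSupport ψ

/-- the generator acting on complex valued functions -/
noncomputable def gC {d : ℕ} (σ : ℝ) (L : Eu d → ℝ) (f : Eu d → ℂ) (x : Eu d) : ℂ :=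
  (σ : ℂ) * ∑ i, pd i (pd i f) x - ∑ i, ((pd i L x : ℝ) : ℂ) * pd i f x

section Calc
variable {d : ℕ} {F : Type*} [NormedAddCommGroup F] [NormedSpace ℝ F]

lemma Sm.pd {f : Eu d → F} (hf : Sm f) (i : Fin d) : Sm (pd i f) := by
  unfold FP.pd
  have h : ContDiff ℝ (⊤ : ℕ∞) (fderiv ℝ f) := hf.fderiv_right (by simp)
  exact h.clm_apply contDiff_const

lemma Sm.diff {f : Eu d → F} (hf : Sm f) : Differentiable ℝ f := hf.differentiable (by simp)

lemma Sm.ofReal {f : Eu d → ℝ} (hf : Sm f) : Sm (fun x => ((f x : ℝ) : ℂ)) :=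
  Complex.ofRealCLM.contDiff.comp hf

lemma pd_mul {f g : Eu d → ℂ} (hf : Sm f) (hg : Sm g) (i : Fin d) (x : Eu d) :
    pd i (fun x => f x * g x) x = pd i f x * g x + f x * pd i g x := by
  unfold pd
  rw [fderiv_fun_mul (hf.diff x) (hg.diff x)]
  simp
  ring

lemma pd_add {f g : Eu d → F} (hf : Sm f) (hg : Sm g) (i : Fin d) (x : Eu d) :
    pd i (fun x => f x + g x) x = pd i f x + pd i g x := by
  unfold pd
  rw [fderiv_fun_add (hf.diff x) (hg.diff x)]
  simp

lemma pd_const_mul {f : Eu d → ℂ} (hf : Sm f) (c : ℂ) (i : Fin d) (x : Eu d) :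
    pd i (fun x => c * f x) x = c * pd i f x := by
  unfold pd
  rw [fderiv_const_mul (hf.diff x)]
  simp

lemma pd_clm {G : Type*} [NormedAddCommGroup G] [NormedSpace ℝ G] (A : F →L[ℝ] G)
    {f : Eu d → F} (hf : Sm f) (i : Fin d) (x : Eu d) :
    pd i (fun x => A (f x)) x = A (pd i f x) := by
  unfold pd
  have : HasFDerivAt (fun x => A (f x)) (A ∘L fderiv ℝ f x) x :=
    A.hasFDerivAt.comp x (hf.diff x).hasFDerivAt
  rw [this.fderiv]
  simp

lemma pd_ofReal {f : Eu d → ℝ} (hf : Sm f) (i : Fin d) (x : Eu d) :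
    pd i (fun x => ((f x : ℝ) : ℂ)) x = ((pd i f x : ℝ) : ℂ) :=
  pd_clm Complex.ofRealCLM hf i x

lemma pd_conj {f : Eu d → ℂ} (hf : Sm f) (i : Fin d) (x : Eu d) :
    pd i (fun x => star (f x)) x = star (pd i f x) :=
  pd_clm (Complex.conjCLE : ℂ →L[ℝ] ℂ) hf i x

lemma Test.pd {ψ : Eu d → ℂ} (h : Test ψ) (i : Fin d) : Test (pd i ψ) :=
  ⟨h.sm.pd i, h.cs.fderiv_apply (𝕜 := ℝ) _⟩

lemma Test.mul_left {ψ f : Eu d → ℂ} (h : Test ψ) (hf : Sm f) : Test (fun x => f x * ψ x) :=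
  ⟨hf.mul h.sm, h.cs.mul_left⟩

lemma Test.mul_right {ψ f : Eu d → ℂ} (h : Test ψ) (hf : Sm f) : Test (fun x => ψ x * f x) :=
  ⟨h.sm.mul hf, h.cs.mul_right⟩

lemma Test.add {ψ f : Eu d → ℂ} (h : Test ψ) (hf : Test f) : Test (fun x => ψ x + f x) :=
  ⟨h.sm.add hf.sm, h.cs.add hf.cs⟩

lemma Test.sub {ψ f : Eu d → ℂ} (h : Test ψ) (hf : Test f) : Test (fun x => ψ x - f x) :=
  ⟨h.sm.sub hf.sm, by
    have : (fun x => ψ x - f x) = ψ + -f := by ext x; simp [sub_eq_add_neg]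
    rw [this]; exact h.cs.add hf.cs.neg⟩

lemma Test.neg {ψ : Eu d → ℂ} (h : Test ψ) : Test (fun x => - ψ x) :=
  ⟨h.sm.neg, h.cs.neg⟩

lemma Test.zero : Test (fun _ : Eu d => (0 : ℂ)) := ⟨contDiff_const, HasCompactSupport.zero⟩

lemma Test.sum {ι : Type*} (s : Finset ι) {ψ : ι → Eu d → ℂ} (h : ∀ i, Test (ψ i)) :
    Test (fun x => ∑ i ∈ s, ψ i x) := by
  classical
  induction s using Finset.induction_on with
  | empty => simpa using Test.zero
  | insert a s ha ih =>
    simp only [Finset.sum_insert ha]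
    exact (h a).add ih

lemma Test.conj {ψ : Eu d → ℂ} (h : Test ψ) : Test (fun x => star (ψ x)) :=
  ⟨(Complex.conjCLE : ℂ →L[ℝ] ℂ).contDiff.comp h.sm, h.cs.comp_left (g := fun z : ℂ => star z) (by simp)⟩

lemma Test.integrable {ψ : Eu d → ℂ} (h : Test ψ) : Integrable ψ :=
  h.sm.continuous.integrable_of_hasCompactSupport h.cs

lemma Sm.gC {L : Eu d → ℝ} (hL : Sm L) (σ : ℝ) {f : Eu d → ℂ} (hf : Sm f) : Sm (gC σ L f) := by
  unfold FP.gC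
  refine ContDiff.sub (contDiff_const.mul (ContDiff.sum fun i _ => (hf.pd i).pd i))
    (ContDiff.sum fun i _ => ?_)
  exact ((hL.pd i).ofReal).mul (hf.pd i)

lemma Test.gC {L : Eu d → ℝ} (hL : Sm L) (σ : ℝ) {f : Eu d → ℂ} (hf : Test f) :
    Test (gC σ L f) := by
  unfold FP.gC
  refine Test.sub (Test.mul_left (Test.sum _ fun i => (hf.pd i).pd i) contDiff_const)
    (Test.sum _ fun i => ?_)
  exact (hf.pd i).mul_left (hL.pd i).ofReal

lemma gC_star {L : Eu d → ℝ} (σ : ℝ) {f : Eu d → ℂ} (hf : Sm f) (x : Eu d) :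
    gC σ L (fun x => star (f x)) x = star (gC σ L f x) := by
  have h1 : ∀ i, pd i (fun x => star (f x)) = fun x => star (pd i f x) :=
    fun i => funext fun x => pd_conj hf i x
  unfold gC
  simp only [h1]
  have h2 : ∀ i, pd i (fun x => star (pd i f x)) x = star (pd i (pd i f) x) :=
    fun i => pd_conj (hf.pd i) i x
  simp only [h2]
  simp

lemma ibp_left {f g : Eu d → ℂ} (hf : Sm f) (hg : Test g) (i : Fin d) :
    ∫ x, pd i f x * g x = - ∫ x, f x * pd i g x := by
  have h := integral_mul_fderiv_eq_neg_fderiv_mul_of_integrable (μ := volume)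
    (f := f) (g := g) (v := EuclideanSpace.single i (1 : ℝ))
    ((hg.mul_left (hf.pd i)).integrable) (((hg.pd i).mul_left hf).integrable)
    ((hg.mul_left hf).integrable)
    (fun x _ => hf.diff x) (fun x _ => hg.sm.diff x)
  unfold pd
  rw [h, neg_neg]

/-- the weight as a complex function -/
noncomputable def wt (σ : ℝ) (L : Eu d → ℝ) (x : Eu d) : ℂ := ((Real.exp (-L x / σ) : ℝ) : ℂ)

/-- square root of the weight -/
noncomputable def rr (σ : ℝ) (L : Eu d → ℝ) (x : Eu d) : ℝ := Real.exp (-L x / (2 * σ))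

lemma rr_pos (σ : ℝ) (L : Eu d → ℝ) (x : Eu d) : 0 < rr σ L x := Real.exp_pos _

lemma rr_sm {L : Eu d → ℝ} (hL : Sm L) (σ : ℝ) : Sm (rr σ L) := by
  unfold rr
  exact Real.contDiff_exp.comp (hL.neg.div_const _)

lemma rr_sq (σ : ℝ) (L : Eu d → ℝ) (x : Eu d) : rr σ L x ^ 2 = Real.exp (-L x / σ) := by
  unfold rr
  rw [← Real.exp_nat_mul]; congr 1
  by_cases h : σ = 0
  · simp [h]
  · push_cast; field_simp

lemma wt_eq (σ : ℝ) (L : Eu d → ℝ) (x : Eu d) :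
    wt σ L x = (rr σ L x : ℂ) * (rr σ L x : ℂ) := by
  unfold wt
  rw [← rr_sq]; push_cast; ring

lemma wt_sm {L : Eu d → ℝ} (hL : Sm L) (σ : ℝ) : Sm (wt σ L) := by
  unfold wt
  exact Sm.ofReal (Real.contDiff_exp.comp (hL.neg.div_const _))

lemma pd_wt {L : Eu d → ℝ} (hL : Sm L) (σ : ℝ) (i : Fin d) (x : Eu d) :
    pd i (wt σ L) x = -((pd i L x : ℝ) : ℂ) / σ * wt σ L x := by
  have hs : Sm (fun x => Real.exp (-L x / σ)) := Real.contDiff_exp.comp (hL.neg.div_const _)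
  have h : pd i (wt σ L) x = ((pd i (fun x => Real.exp (-L x / σ)) x : ℝ) : ℂ) := pd_ofReal hs i x
  rw [h]
  have h2 : pd i (fun x => Real.exp (-L x / σ)) x = -(pd i L x) / σ * Real.exp (-L x / σ) := by
    unfold pd
    have h3 : HasFDerivAt (fun x => -L x / σ) (σ⁻¹ • (-(fderiv ℝ L x))) x := by
      have := ((hL.diff x).hasFDerivAt.neg).const_mul (σ⁻¹)
      refine this.congr_of_eventuallyEq (Eventually.of_forall fun y => ?_)
      simp [div_eq_inv_mul]
    rw [(h3.exp).fderiv]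
    simp
    ring
  rw [h2]
  unfold wt
  push_cast
  ring

/-- Green formula, derivatives moved to the test function. -/
lemma green_right {σ : ℝ} (hσ : 0 < σ) {L : Eu d → ℝ} (hL : Sm L) {f ψ : Eu d → ℂ}
    (hf : Sm f) (hψ : Test ψ) :
    (σ : ℂ) * ∑ i, ∫ x, pd i f x * pd i ψ x * wt σ L x = - ∫ x, f x * gC σ L ψ x * wt σ L x := by
  have hw := wt_sm hL σ
  have hσ' : (σ : ℂ) ≠ 0 := by exact_mod_cast hσ.ne'
  have h1 : ∀ i, ∫ x, pd i f x * pd i ψ x * wt σ L x =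
      - ∫ x, f x * (pd i (pd i ψ) x * wt σ L x - ((pd i L x : ℝ) : ℂ) / σ * pd i ψ x * wt σ L x) := by
    intro i
    have := ibp_left hf ((hψ.pd i).mul_right hw) i
    simp only [mul_assoc] at this ⊢
    rw [this]
    congr 2
    ext x
    rw [pd_mul (hψ.pd i).sm hw, pd_wt hL]
    ring
  have hintg : ∀ i, Integrable fun x => f x * (pd i (pd i ψ) x * wt σ L x -
      ((pd i L x : ℝ) : ℂ) / σ * pd i ψ x * wt σ L x) := by
    intro i
    have hc : Sm (fun x => ((pd i L x : ℝ) : ℂ) / σ) := (hL.pd i).ofReal.div_const _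
    exact (Test.mul_left ((((hψ.pd i).pd i).mul_right hw).sub
      (((hψ.pd i).mul_left hc).mul_right hw)) hf).integrable
  simp only [h1]
  rw [Finset.sum_neg_distrib, mul_neg, ← integral_finsetSum _ fun i _ => hintg i,
    ← integral_const_mul]
  congr 2
  ext x
  unfold gC
  rw [← Finset.mul_sum, Finset.sum_sub_distrib, ← Finset.sum_mul, ← Finset.sum_mul]
  have : ∑ i, ((pd i L x : ℝ) : ℂ) / σ * pd i ψ x = (∑ i, ((pd i L x : ℝ) : ℂ) * pd i ψ x) / σ := by
    rw [Finset.sum_div]; congr 1; ext i; ring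
  rw [this]
  field_simp

/-- Green formula, derivatives moved to the smooth function. -/
lemma green_left {σ : ℝ} (hσ : 0 < σ) {L : Eu d → ℝ} (hL : Sm L) {f ψ : Eu d → ℂ}
    (hf : Sm f) (hψ : Test ψ) :
    (σ : ℂ) * ∑ i, ∫ x, pd i f x * pd i ψ x * wt σ L x = - ∫ x, gC σ L f x * ψ x * wt σ L x := by
  have hw := wt_sm hL σ
  have hσ' : (σ : ℂ) ≠ 0 := by exact_mod_cast hσ.ne'
  have h1 : ∀ i, ∫ x, pd i f x * pd i ψ x * wt σ L x =
      - ∫ x, (pd i (pd i f) x * wt σ L x - ((pd i L x : ℝ) : ℂ) / σ * pd i f x * wt σ L x) * ψ x := by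
    intro i
    have := ibp_left ((hf.pd i).mul hw) hψ i
    have e : ∫ x, pd i f x * pd i ψ x * wt σ L x = ∫ x, pd i f x * wt σ L x * pd i ψ x := by
      congr 1; ext x; ring
    rw [e, eq_neg_iff_add_eq_zero, add_comm, ← eq_neg_iff_add_eq_zero]
    rw [← this]
    congr 1
    ext x
    rw [pd_mul (hf.pd i) hw, pd_wt hL]
    ring
  have hintg : ∀ i, Integrable fun x => (pd i (pd i f) x * wt σ L x -
      ((pd i L x : ℝ) : ℂ) / σ * pd i f x * wt σ L x) * ψ x := by
    intro i
    have hc : Sm (fun x => ((pd i L x : ℝ) : ℂ) / σ) := (hL.pd i).ofReal.div_const _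
    exact (Test.mul_left hψ ((((hf.pd i).pd i).mul hw).sub ((hc.mul (hf.pd i)).mul hw))).integrable
  simp only [h1]
  rw [Finset.sum_neg_distrib, mul_neg, ← integral_finsetSum _ fun i _ => hintg i,
    ← integral_const_mul]
  congr 2
  ext x
  unfold gC
  rw [← Finset.sum_mul, Finset.sum_sub_distrib, ← Finset.sum_mul, ← Finset.sum_mul]
  have : ∑ i, ((pd i L x : ℝ) : ℂ) / σ * pd i f x = (∑ i, ((pd i L x : ℝ) : ℂ) * pd i f x) / σ := by
    rw [Finset.sum_div]; congr 1; ext i; ring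
  rw [this]
  field_simp

end Calc
end FP

namespace FP

noncomputable abbrev HH (d : ℕ) : Type := ↥(Lp ℂ 2 (volume : Measure (Eu d)))
noncomputable abbrev GG (d : ℕ) : Type := PiLp 2 (fun _ : Option (Fin d) => HH d)

section Hilb
variable {d : ℕ} {σ : ℝ} {L : Eu d → ℝ}

open Classical in
/-- the element of `L²` given by `√π · f` -/
noncomputable def emb (σ : ℝ) (L : Eu d → ℝ) (f : Eu d → ℂ) : HH d :=
  if h : MemLp (fun x => (rr σ L x : ℂ) * f x) 2 (volume : Measure (Eu d)) then h.toLp _ else 0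

lemma Test.memLp {ψ : Eu d → ℂ} (h : Test ψ) : MemLp ψ 2 (volume : Measure (Eu d)) :=
  h.sm.continuous.memLp_of_hasCompactSupport h.cs

lemma Test.rr_mul (hL : Sm L) {ψ : Eu d → ℂ} (h : Test ψ) :
    Test (fun x => (rr σ L x : ℂ) * ψ x) := h.mul_left (rr_sm hL σ).ofReal

lemma emb_coe (hL : Sm L) {ψ : Eu d → ℂ} (h : Test ψ) :
    (emb σ L ψ : Eu d → ℂ) =ᵐ[volume] fun x => (rr σ L x : ℂ) * ψ x := by
  have hm := (h.rr_mul (σ := σ) hL).memLp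
  unfold emb
  rw [dif_pos hm]
  exact hm.coeFn_toLp

lemma emb_add (hL : Sm L) {ψ φ : Eu d → ℂ} (h : Test ψ) (h' : Test φ) :
    emb σ L (fun x => ψ x + φ x) = emb σ L ψ + emb σ L φ := by
  apply Lp.ext
  filter_upwards [emb_coe (σ := σ) hL (h.add h'), emb_coe (σ := σ) hL h, emb_coe (σ := σ) hL h',
    Lp.coeFn_add (emb σ L ψ) (emb σ L φ)] with x h1 h2 h3 h4
  rw [h1, h4, Pi.add_apply, h2, h3]; ring

lemma emb_smul (hL : Sm L) (c : ℂ) {ψ : Eu d → ℂ} (h : Test ψ) :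
    emb σ L (fun x => c * ψ x) = c • emb σ L ψ := by
  apply Lp.ext
  filter_upwards [emb_coe (σ := σ) hL (h.mul_left (f := fun _ => c) contDiff_const),
    emb_coe (σ := σ) hL h, Lp.coeFn_smul c (emb σ L ψ)] with x h1 h2 h4
  rw [h1, h4, Pi.smul_apply, h2, smul_eq_mul]; ring

lemma emb_zero (hL : Sm L) : emb σ L (fun _ => 0) = 0 := by
  apply Lp.ext
  filter_upwards [emb_coe (σ := σ) hL Test.zero, Lp.coeFn_zero ℂ 2 (volume : Measure (Eu d))]
    with x h1 h2
  rw [h1, h2]; simp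

lemma inner_emb (hL : Sm L) {ψ : Eu d → ℂ} (h : Test ψ) (y : HH d) :
    inner ℂ (emb σ L ψ) y = ∫ x, star (ψ x) * rr σ L x * y x := by
  rw [L2.inner_def]
  refine integral_congr_ae ?_
  filter_upwards [emb_coe (σ := σ) hL h] with x h1
  rw [h1, RCLike.inner_apply]
  simp
  ring

lemma inner_emb_emb (hL : Sm L) {ψ φ : Eu d → ℂ} (h : Test ψ) (h' : Test φ) :
    inner ℂ (emb σ L ψ) (emb σ L φ) = ∫ x, star (ψ x) * φ x * wt σ L x := by
  rw [inner_emb hL h]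
  refine integral_congr_ae ?_
  filter_upwards [emb_coe (σ := σ) hL h'] with x h1
  rw [h1, wt_eq]
  ring

/-- graph element of a test function -/
noncomputable def kel (σ : ℝ) (L : Eu d → ℝ) (ψ : Eu d → ℂ) : GG d :=
  WithLp.toLp 2 (fun o => o.elim (emb σ L ψ) (fun i => ((√σ : ℝ) : ℂ) • emb σ L (pd i ψ)))

@[simp] lemma kel_none (ψ : Eu d → ℂ) : kel σ L ψ none = emb σ L ψ := rfl
@[simp] lemma kel_some (ψ : Eu d → ℂ) (i : Fin d) :
    kel σ L ψ (some i) = ((√σ : ℝ) : ℂ) • emb σ L (pd i ψ) := rfl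

/-- graphs of test functions -/
noncomputable def K0 (σ : ℝ) (L : Eu d → ℝ) (hL : Sm L) : Submodule ℂ (GG d) where
  carrier := {k | ∃ ψ, Test ψ ∧ k = kel σ L ψ}
  add_mem' := by
    rintro _ _ ⟨ψ, h, rfl⟩ ⟨φ, h', rfl⟩
    refine ⟨_, h.add h', ?_⟩
    ext1 o
    cases o with
    | none => simp [emb_add hL h h']
    | some i =>
      have : pd i (fun x => ψ x + φ x) = fun x => pd i ψ x + pd i φ x :=
        funext fun x => pd_add h.sm h'.sm i x
      simp [this, emb_add hL (h.pd i) (h'.pd i)]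
  zero_mem' := by
    refine ⟨_, Test.zero, ?_⟩
    ext1 o
    cases o with
    | none => simp [emb_zero hL]
    | some i =>
      have : pd i (fun _ : Eu d => (0 : ℂ)) = fun _ => 0 := by
        funext x; simp [pd]
      simp [this, emb_zero hL]
  smul_mem' := by
    rintro c _ ⟨ψ, h, rfl⟩
    refine ⟨_, h.mul_left (f := fun _ => c) contDiff_const, ?_⟩
    ext1 o
    cases o with
    | none => simp [emb_smul hL c h]
    | some i =>
      rw [PiLp.smul_apply]
      have : pd i (fun x => c * ψ x) = fun x => c * pd i ψ x :=
        funext fun x => pd_const_mul h.sm c i x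
      rw [kel_some, kel_some, this, emb_smul hL c (h.pd i), smul_smul, smul_smul, mul_comm]

noncomputable def Kc (σ : ℝ) (L : Eu d → ℝ) (hL : Sm L) : Submodule ℂ (GG d) :=
  (K0 σ L hL).topologicalClosure

lemma Kc_closed (hL : Sm L) : IsClosed (Kc σ L hL : Set (GG d)) :=
  Submodule.isClosed_topologicalClosure _

instance instCompleteKc (hL : Sm L) : CompleteSpace (Kc σ L hL) := (Kc_closed hL).completeSpace_coe

lemma kel_mem (hL : Sm L) {ψ : Eu d → ℂ} (h : Test ψ) : kel σ L ψ ∈ Kc σ L hL :=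
  Submodule.le_topologicalClosure _ ⟨ψ, h, rfl⟩

lemma Kc_induct (hL : Sm L) {p : GG d → Prop} (hp : IsClosed {k | p k})
    (h : ∀ ψ, Test ψ → p (kel σ L ψ)) : ∀ k ∈ Kc σ L hL, p k := by
  intro k hk
  have : closure (K0 σ L hL : Set (GG d)) ⊆ {k | p k} := by
    apply closure_minimal _ hp
    rintro _ ⟨ψ, hψ, rfl⟩
    exact h ψ hψ
  exact this hk

/-- first component -/
noncomputable def pr (d : ℕ) : GG d →L[ℂ] HH d := PiLp.proj 2 (fun _ : Option (Fin d) => HH d) none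

@[simp] lemma pr_apply (k : GG d) : pr d k = k none := rfl

/-- lift of `z` to the form domain -/
noncomputable def kap (σ : ℝ) (L : Eu d → ℝ) (hL : Sm L) : HH d →L[ℂ] GG d :=
  (Kc σ L hL).starProjection ∘L (ContinuousLinearMap.adjoint (pr d))

noncomputable def TT (σ : ℝ) (L : Eu d → ℝ) (hL : Sm L) : HH d →L[ℂ] HH d :=
  pr d ∘L kap σ L hL

lemma TT_apply (hL : Sm L) (z : HH d) : TT σ L hL z = kap σ L hL z none := rfl

lemma kap_mem (hL : Sm L) (z : HH d) : kap σ L hL z ∈ Kc σ L hL := by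
  unfold kap
  exact Submodule.starProjection_apply_mem _ _

lemma inner_kap (hL : Sm L) (z : HH d) {k : GG d} (hk : k ∈ Kc σ L hL) :
    inner ℂ (kap σ L hL z) k = inner ℂ z (k none) := by
  unfold kap
  rw [ContinuousLinearMap.comp_apply, Submodule.inner_starProjection_left_eq_right,
    (Submodule.starProjection_eq_self_iff).2 hk, ContinuousLinearMap.adjoint_inner_left]
  rfl

lemma kap_unique (hL : Sm L) (z : HH d) {k : GG d} (hk : k ∈ Kc σ L hL)
    (h : ∀ k' ∈ Kc σ L hL, inner ℂ k k' = inner ℂ z (k' none)) : kap σ L hL z = k := by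
  have hm : kap σ L hL z - k ∈ Kc σ L hL := Submodule.sub_mem _ (kap_mem hL z) hk
  have : inner ℂ (kap σ L hL z - k) (kap σ L hL z - k) = (0 : ℂ) := by
    rw [inner_sub_left, inner_kap hL z hm, h _ hm, sub_self]
  rw [inner_self_eq_zero, sub_eq_zero] at this
  exact this

lemma TT_pos (hL : Sm L) : (TT σ L hL).IsPositive := by
  have h : (Kc σ L hL).starProjection.IsPositive := .of_isStarProjection isStarProjection_starProjection
  have := h.conj_adjoint (pr d)
  exact this

lemma TT_sa (hL : Sm L) : IsSelfAdjoint (TT σ L hL) := (TT_pos hL).isSelfAdjoint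

lemma inner_GG (a b : GG d) : inner ℂ a b = inner ℂ (a none) (b none) +
    ∑ i, inner ℂ (a (some i)) (b (some i)) := by
  rw [PiLp.inner_apply, Fintype.sum_option]

lemma norm_GG (a : GG d) : ‖a‖ ^ 2 = ‖a none‖ ^ 2 + ∑ i, ‖a (some i)‖ ^ 2 := by
  rw [PiLp.norm_sq_eq_of_L2, Fintype.sum_option]

lemma TT_norm (hL : Sm L) : ‖TT σ L hL‖ ≤ 1 := by
  refine ContinuousLinearMap.opNorm_le_bound _ zero_le_one fun z => ?_
  have h1 := inner_kap hL z (kap_mem (σ := σ) hL z)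
  have h2 : ‖kap σ L hL z‖ ^ 2 ≤ ‖z‖ * ‖kap σ L hL z none‖ := by
    have h3 : ‖inner ℂ (kap σ L hL z) (kap σ L hL z)‖ = ‖kap σ L hL z‖ ^ 2 := by
      rw [inner_self_eq_norm_sq_to_K]; simp
    rw [← h3, h1]
    exact norm_inner_le_norm _ _
  rw [norm_GG] at h2
  rw [TT_apply, one_mul]
  have h4 : 0 ≤ ∑ i, ‖kap σ L hL z (some i)‖ ^ 2 := by positivity
  by_contra hc
  push Not at hc
  nlinarith [norm_nonneg z]

lemma TT_sp (hL : Sm L) : spectrum ℝ (TT σ L hL) ⊆ Set.Icc 0 1 :=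
  spectrum_sub (TT_pos hL) (TT_norm hL)

/-- energy identity -/
lemma kap_energy (hL : Sm L) (z : HH d) :
    ‖TT σ L hL z‖ ^ 2 + ∑ i, ‖kap σ L hL z (some i)‖ ^ 2 = (inner ℂ z (TT σ L hL z)).re := by
  have h1 := inner_kap hL z (kap_mem (σ := σ) hL z)
  have h3 : (inner ℂ (kap σ L hL z) (kap σ L hL z)).re = ‖kap σ L hL z‖ ^ 2 := by
    rw [inner_self_eq_norm_sq_to_K]; norm_cast
  rw [TT_apply, ← h1, h3, norm_GG]

/-- test functions are in the range of the resolvent -/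
lemma TT_test (hσ : 0 < σ) (hL : Sm L) {ψ : Eu d → ℂ} (h : Test ψ) :
    emb σ L ψ = TT σ L hL (emb σ L (fun x => ψ x - gC σ L ψ x)) := by
  have ht : Test (fun x => ψ x - gC σ L ψ x) := h.sub (h.gC hL σ)
  rw [TT_apply, kap_unique hL _ (kel_mem hL h)]
  · rfl
  refine Kc_induct hL (p := fun k' => inner ℂ (kel σ L ψ) k' =
    inner ℂ (emb σ L fun x => ψ x - gC σ L ψ x) (k' none)) ?_ ?_
  · apply isClosed_eq
    · fun_prop
    · have : Continuous fun k : GG d => k none := (pr d).continuous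
      fun_prop
  · intro φ hφ
    rw [inner_GG]
    simp only [kel_none, kel_some, inner_smul_left, inner_smul_right]
    rw [inner_emb_emb hL h hφ, inner_emb_emb hL ht hφ]
    have e1 : ∀ i, inner ℂ (emb σ L (pd i ψ)) (emb σ L (pd i φ)) =
        ∫ x, pd i φ x * pd i (fun x => star (ψ x)) x * wt σ L x := by
      intro i
      rw [inner_emb_emb hL (h.pd i) (hφ.pd i)]
      congr 1; ext x
      rw [pd_conj h.sm]; ring
    have hs : ((√σ : ℝ) : ℂ) * ((√σ : ℝ) : ℂ) = (σ : ℂ) := by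
      rw [← Complex.ofReal_mul, Real.mul_self_sqrt hσ.le]
    simp only [e1, Complex.conj_ofReal, ← mul_assoc, hs]
    rw [← Finset.mul_sum, green_right hσ hL hφ.sm h.conj, ← sub_eq_add_neg, ← integral_sub]
    · congr 1; ext x
      rw [gC_star σ h.sm, star_sub]
      ring
    · exact ((h.conj.mul_right hφ.sm).mul_right (wt_sm hL σ)).integrable
    · exact (((h.conj.gC hL σ).mul_left hφ.sm).mul_right (wt_sm hL σ)).integrable

lemma emb_sub (hL : Sm L) {ψ φ : Eu d → ℂ} (h : Test ψ) (h' : Test φ) :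
    emb σ L (fun x => ψ x - φ x) = emb σ L ψ - emb σ L φ := by
  have := emb_add (σ := σ) hL (h.sub h') h'
  simp only [sub_add_cancel] at this
  rw [show (fun x => ψ x) = ψ from rfl] at this
  rw [this]; simp

/-- the weak form of `A^{m+1} u = A (A^m u)`. -/
lemma weak_eq (hσ : 0 < σ) (hL : Sm L) {ψ : Eu d → ℂ} (h : Test ψ) (m : ℕ) {t : ℝ} (ht : 0 < t)
    (f : HH d) :
    ∫ x, ψ x * rr σ L x * Y (TT σ L hL) (m + 1) t f x =
      - ∫ x, gC σ L ψ x * rr σ L x * Y (TT σ L hL) m t f x := by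
  have h1 := Y_weak (TT_sa hL) (TT_sp hL) m ht f (TT_test hσ hL h.conj)
  rw [emb_sub hL h.conj (h.conj.gC hL σ), sub_sub_cancel_left, inner_neg_left,
    inner_emb hL h.conj, inner_emb hL (h.conj.gC hL σ)] at h1
  simp only [star_star, gC_star σ h.sm] at h1
  exact h1

/-- weak gradient for elements of the form domain -/
lemma Kc_weak_grad (hL : Sm L) {ψ : Eu d → ℂ} (h : Test ψ) (i : Fin d) :
    ∀ k ∈ Kc σ L hL, ∫ x, ψ x * rr σ L x * k (some i) x =
      - ((√σ : ℝ) : ℂ) * ∫ x, (pd i ψ x - ((pd i L x : ℝ) : ℂ) / σ * ψ x) * rr σ L x * k none x := by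
  have hc : Sm (fun x => ((pd i L x : ℝ) : ℂ) / σ) := (hL.pd i).ofReal.div_const _
  set θ : Eu d → ℂ := fun x => pd i ψ x - ((pd i L x : ℝ) : ℂ) / σ * ψ x with hθ
  have hθt : Test θ := (h.pd i).sub (h.mul_left hc)
  have e1 : ∀ y : HH d, ∫ x, ψ x * rr σ L x * y x = inner ℂ (emb σ L fun x => star (ψ x)) y := by
    intro y
    rw [inner_emb hL h.conj]; simp
  have e2 : ∀ y : HH d, ∫ x, θ x * rr σ L x * y x = inner ℂ (emb σ L fun x => star (θ x)) y := by
    intro y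
    rw [inner_emb hL hθt.conj]; simp
  suffices hk : ∀ k ∈ Kc σ L hL, inner ℂ (emb σ L fun x => star (ψ x)) (k (some i)) =
      - ((√σ : ℝ) : ℂ) * inner ℂ (emb σ L fun x => star (θ x)) (k none) by
    intro k hk'
    rw [e1, hk k hk', ← e2]
  refine Kc_induct hL (p := fun k => inner ℂ (emb σ L fun x => star (ψ x)) (k (some i)) =
      - ((√σ : ℝ) : ℂ) * inner ℂ (emb σ L fun x => star (θ x)) (k none)) ?_ ?_
  · have h1 : Continuous fun k : GG d => k none := (pr d).continuous
    have h2 : Continuous fun k : GG d => k (some i) :=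
      (PiLp.proj 2 (fun _ : Option (Fin d) => HH d) (some i) : GG d →L[ℂ] HH d).continuous
    apply isClosed_eq <;> fun_prop
  · intro φ hφ
    simp only [kel_none, kel_some, inner_smul_right]
    rw [inner_emb_emb hL h.conj (hφ.pd i), inner_emb_emb hL hθt.conj hφ]
    simp only [star_star]
    have := ibp_left hφ.sm (h.mul_right (wt_sm hL σ)) i
    have e3 : ∫ x, ψ x * pd i φ x * wt σ L x = ∫ x, pd i φ x * (ψ x * wt σ L x) := by
      congr 1; ext x; ring
    rw [e3, this, neg_mul, mul_neg]
    congr 3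
    ext x
    rw [pd_mul h.sm (wt_sm hL σ), pd_wt hL, hθ]
    ring

end Hilb
end FP

namespace FP

section Abs
variable {H : Type*} [NormedAddCommGroup H] [InnerProductSpace ℂ H]

noncomputable def Rs [CompleteSpace H] (T : H →L[ℂ] H) (s : ℝ) (f : H) : H := cfc (rf s) T f

lemma Rs_eq [CompleteSpace H] {T : H →L[ℂ] H} (hT : IsSelfAdjoint T) (hsp : spectrum ℝ T ⊆ Set.Icc 0 1) {s : ℝ}
    (hs : 0 < s) (f : H) : ∃ z, Rs T s f = T z ∧ Rs T s f + s • (z - Rs T s f) = f :=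
  ⟨_, resolvent_eq hT hsp hs f⟩

lemma Rs_closed [CompleteSpace H] {T : H →L[ℂ] H} (hT : IsSelfAdjoint T) (hsp : spectrum ℝ T ⊆ Set.Icc 0 1)
    {C : Set H} (hC : IsClosed C) (hr : ∀ s > 0, ∀ f ∈ C, Rs T s f ∈ C) {t : ℝ} (ht : 0 < t)
    {f : H} (hf' : f ∈ C) : Y T 0 t f ∈ C := Y_mem_closed hT hsp hC hr ht hf'

lemma norm_sub_sq_exp (a f v : H) : ‖a - f‖ ^ 2 = ‖v - f‖ ^ 2 + 2 * (inner ℂ (v - f) (a - v)).re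
      + ‖a - v‖ ^ 2 := by
  have := norm_add_sq (𝕜 := ℂ) (v - f) (a - v)
  rw [show v - f + (a - v) = a - f by abel] at this
  exact this

lemma norm_sq_exp (a v : H) : ‖a‖ ^ 2 = ‖v‖ ^ 2 + 2 * (inner ℂ v (a - v)).re
      + ‖a - v‖ ^ 2 := by
  have := norm_add_sq (𝕜 := ℂ) v (a - v)
  rw [show v + (a - v) = a by abel] at this
  exact this

lemma inner_res {s : ℝ} {v z f : H} (hz : v + s • (z - v) = f) (w : H) :
    (inner ℂ (v - f) w).re = - s * ((inner ℂ z w).re - (inner ℂ v w).re) := by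
  have h5 : v - f = ((-s : ℝ) : ℂ) • (z - v) := by
    rw [← hz, Complex.coe_smul, neg_smul]; abel
  rw [h5, inner_smul_left, inner_sub_left]
  simp
end Abs

section Pos
variable {d : ℕ} {σ : ℝ} {L : Eu d → ℝ}

noncomputable def bumpB (d : ℕ) (R : ℝ) : ContDiffBump (0 : Eu d) where
  rIn := max R 1
  rOut := max R 1 + 1
  rIn_pos := by positivity
  rIn_lt_rOut := by linarith

/-- cutoff functions -/
noncomputable def bump (d : ℕ) (R : ℝ) (x : Eu d) : ℂ := ((bumpB d R x : ℝ) : ℂ)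

lemma bump_test (R : ℝ) : Test (bump d R) :=
  ⟨Sm.ofReal (bumpB d R).contDiff, (bumpB d R).hasCompactSupport.comp_left (g := fun x : ℝ => (x : ℂ)) (by simp)⟩

lemma bump_one {R : ℝ} {x : Eu d} (h : ‖x‖ ≤ R) : bump d R x = 1 := by
  unfold bump
  rw [(bumpB d R).one_of_mem_closedBall]
  · simp
  · simp only [Metric.mem_closedBall, dist_zero_right, bumpB]
    exact h.trans (le_max_left _ _)

lemma lip_abs : LipschitzWith 1 (fun z : ℂ => ((‖z‖ : ℝ) : ℂ)) := by
  refine LipschitzWith.of_dist_le_mul fun x y => ?_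
  rw [Complex.dist_eq, ← Complex.ofReal_sub, Complex.norm_real, Complex.dist_eq, NNReal.coe_one, one_mul]
  exact abs_norm_sub_norm_le x y

/-- modulus on `L²` -/
noncomputable def NN (f : HH d) : HH d := lip_abs.compLp (by simp) f

lemma NN_coe (f : HH d) : (NN f : Eu d → ℂ) =ᵐ[volume] fun x => ((‖f x‖ : ℝ) : ℂ) :=
  LipschitzWith.coeFn_compLp _ _ _

lemma NN_lip (f g : HH d) : ‖NN f - NN g‖ ≤ ‖f - g‖ := by
  have := lip_abs.norm_compLp_sub_le (by simp) f g
  rw [NNReal.coe_one, one_mul] at this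
  exact this

lemma NN_cont : Continuous (NN : HH d → HH d) := lip_abs.continuous_compLp (by simp)

noncomputable def qe (ε : ℝ) (ψ : Eu d → ℂ) (x : Eu d) : ℝ := √(‖ψ x‖ ^ 2 + ε ^ 2) - ε

lemma qe_sm {ε : ℝ} (hε : 0 < ε) {ψ : Eu d → ℂ} (h : Test ψ) : Sm (qe ε ψ) := by
  unfold qe
  refine ContDiff.sub (ContDiff.sqrt ?_ ?_) contDiff_const
  · exact (h.sm.norm_sq ℝ).add contDiff_const
  · intro x; positivity

lemma qe_test {ε : ℝ} (hε : 0 < ε) {ψ : Eu d → ℂ} (h : Test ψ) :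
    Test (fun x => ((qe ε ψ x : ℝ) : ℂ)) := by
  refine ⟨Sm.ofReal (qe_sm hε h), ?_⟩
  exact h.cs.comp_left (g := fun z : ℂ => ((√(‖z‖ ^ 2 + ε ^ 2) - ε : ℝ) : ℂ)) (by
    simp [Real.sqrt_sq hε.le])

lemma qe_pd {ε : ℝ} (hε : 0 < ε) {ψ : Eu d → ℂ} (h : Test ψ) (i : Fin d) (x : Eu d) :
    ‖pd i (fun x => ((qe ε ψ x : ℝ) : ℂ)) x‖ ≤ ‖pd i ψ x‖ := by
  rw [pd_ofReal (qe_sm hε h), Complex.norm_real]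
  have hpos : 0 < ‖ψ x‖ ^ 2 + ε ^ 2 := by positivity
  have h1 : HasFDerivAt (qe ε ψ) _ x :=
    (((h.sm.diff x).hasFDerivAt.norm_sq.add_const (ε ^ 2)).sqrt hpos.ne').sub_const ε
  unfold pd
  rw [h1.fderiv]
  simp only [smul_apply, ContinuousLinearMap.comp_apply, innerSL_apply_apply,
    nsmul_eq_mul, smul_eq_mul]
  set s := √(‖ψ x‖ ^ 2 + ε ^ 2) with hs
  have hs0 : 0 < s := Real.sqrt_pos.2 hpos
  have hs1 : ‖ψ x‖ ≤ s := Real.le_sqrt_of_sq_le (by nlinarith)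
  have h2 := abs_real_inner_le_norm (ψ x) (fderiv ℝ ψ x (EuclideanSpace.single i (1:ℝ)))
  set D := fderiv ℝ ψ x (EuclideanSpace.single i (1:ℝ))
  rw [Real.norm_eq_abs, show 1 / (2 * s) * ((2 : ℕ) * inner ℝ (ψ x) D) = inner ℝ (ψ x) D / s by
    push_cast; field_simp, abs_div, abs_of_pos hs0, div_le_iff₀ hs0]
  nlinarith [norm_nonneg D]

lemma qe_close {ε : ℝ} (hε : 0 < ε) {ψ : Eu d → ℂ} (x : Eu d) :
    |qe ε ψ x - ‖ψ x‖| ≤ ε := by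
  unfold qe
  have h0 := norm_nonneg (ψ x)
  have h1 : ‖ψ x‖ ≤ √(‖ψ x‖ ^ 2 + ε ^ 2) := Real.le_sqrt_of_sq_le (by nlinarith)
  have h2 : √(‖ψ x‖ ^ 2 + ε ^ 2) ≤ ‖ψ x‖ + ε := Real.sqrt_le_iff.2 ⟨by positivity, by nlinarith⟩
  rw [abs_le]; constructor <;> linarith

lemma qe_tendsto (hL : Sm L) {ψ : Eu d → ℂ} (h : Test ψ) :
    Tendsto (fun n : ℕ => emb σ L (fun x => ((qe (1 / ((n : ℝ) + 1)) ψ x : ℝ) : ℂ))) atTop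
      (𝓝 (NN (emb σ L ψ))) := by
  obtain ⟨R, hR⟩ := h.cs.isCompact.isBounded.exists_norm_le
  have key : ∀ ε > 0, ‖emb σ L (fun x => ((qe ε ψ x : ℝ) : ℂ)) - NN (emb σ L ψ)‖ ≤
      ε * ‖emb σ L (bump d R)‖ := by
    intro ε hε
    refine Lp.norm_le_mul_norm_of_ae_le_mul ?_
    filter_upwards [emb_coe (σ := σ) hL (qe_test hε h), emb_coe (σ := σ) hL h,
      emb_coe (σ := σ) hL (bump_test R), NN_coe (emb σ L ψ),
      Lp.coeFn_sub (emb σ L (fun x => ((qe ε ψ x : ℝ) : ℂ))) (NN (emb σ L ψ))] with x h1 h2 h3 h4 h5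
    have hr := rr_pos σ L x
    rw [h5, Pi.sub_apply, h1, h4, h2, h3]
    by_cases hx : ‖x‖ ≤ R
    · rw [bump_one hx, norm_mul, Complex.norm_real, Real.norm_of_nonneg hr.le, mul_one,
        Complex.norm_real, Real.norm_of_nonneg hr.le, ← Complex.ofReal_mul, ← Complex.ofReal_sub,
        Complex.norm_real, ← mul_sub, norm_mul, Real.norm_of_nonneg hr.le, Real.norm_eq_abs]
      nlinarith [qe_close hε (ψ := ψ) x]
    · have : ψ x = 0 := by
        by_contra hc
        exact hx (hR x (subset_tsupport _ hc))
      have h6 : qe ε ψ x = 0 := by simp [qe, this, Real.sqrt_sq hε.le]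
      rw [h6, this]
      simp
      positivity
  rw [tendsto_iff_norm_sub_tendsto_zero]
  have hlim : Tendsto (fun n : ℕ => 1 / ((n : ℝ) + 1) * ‖emb σ L (bump d R)‖) atTop (𝓝 0) := by
    have := tendsto_one_div_add_atTop_nhds_zero_nat (𝕜 := ℝ) |>.mul_const ‖emb σ L (bump d R)‖
    simpa using this
  exact squeeze_zero (fun _ => norm_nonneg _) (fun n => key _ (by positivity)) hlim

lemma qe_energy (hL : Sm L) {ε : ℝ} (hε : 0 < ε) {ψ : Eu d → ℂ} (h : Test ψ) (i : Fin d) :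
    ‖kel σ L (fun x => ((qe ε ψ x : ℝ) : ℂ)) (some i)‖ ≤ ‖kel σ L ψ (some i)‖ := by
  rw [kel_some, kel_some, norm_smul, norm_smul]
  refine mul_le_mul_of_nonneg_left ?_ (norm_nonneg _)
  refine Lp.norm_le_norm_of_ae_le ?_
  filter_upwards [emb_coe (σ := σ) hL ((qe_test hε h).pd i), emb_coe (σ := σ) hL (h.pd i)] with x h1 h2
  rw [h1, h2, norm_mul, norm_mul]
  exact mul_le_mul_of_nonneg_left (qe_pd hε h i x) (norm_nonneg _)

/-- minimisation property of the resolvent -/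
lemma res_min (hL : Sm L) {s : ℝ} (hs : 0 < s) (f v z : HH d) (hv : v = TT σ L hL z)
    (hz : v + s • (z - v) = f) {k : GG d} (hk : k ∈ Kc σ L hL) :
    ‖v - f‖ ^ 2 + s * ∑ i, ‖kap σ L hL z (some i)‖ ^ 2 + ‖k none - v‖ ^ 2 ≤
      ‖k none - f‖ ^ 2 + s * ∑ i, ‖k (some i)‖ ^ 2 := by
  set G := kap σ L hL z with hG
  have hGv : G none = v := by rw [hv, TT_apply]
  have hkG : k - G ∈ Kc σ L hL := Submodule.sub_mem _ hk (kap_mem hL z)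
  have h1 := inner_kap hL z hkG
  rw [← hG, inner_GG] at h1
  simp only [PiLp.sub_apply, hGv] at h1
  have h2 : (inner ℂ v (k none - v)).re + ∑ i, (inner ℂ (G (some i)) (k (some i) - G (some i))).re =
      (inner ℂ z (k none - v)).re := by
    rw [← h1, Complex.add_re, Complex.re_sum]
  have h3 : ∀ i, ‖k (some i)‖ ^ 2 = ‖G (some i)‖ ^ 2 +
      2 * (inner ℂ (G (some i)) (k (some i) - G (some i))).re + ‖k (some i) - G (some i)‖ ^ 2 := by
    exact fun i => norm_sq_exp _ _
  have h4 : ‖k none - f‖ ^ 2 = ‖v - f‖ ^ 2 + 2 * (inner ℂ (v - f) (k none - v)).re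
      + ‖k none - v‖ ^ 2 := by
    exact norm_sub_sq_exp _ _ _
  have h6 : (inner ℂ (v - f) (k none - v)).re = - s * ((inner ℂ z (k none - v)).re -
      (inner ℂ v (k none - v)).re) := inner_res hz _
  have h3s : ∑ i, ‖k (some i)‖ ^ 2 = ∑ i, ‖G (some i)‖ ^ 2 +
      2 * ∑ i, (inner ℂ (G (some i)) (k (some i) - G (some i))).re +
      ∑ i, ‖k (some i) - G (some i)‖ ^ 2 := by
    rw [Finset.sum_congr rfl fun i _ => h3 i, Finset.sum_add_distrib, Finset.sum_add_distrib,
      ← Finset.mul_sum]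
  have h7 : 0 ≤ ∑ i, ‖k (some i) - G (some i)‖ ^ 2 := Finset.sum_nonneg fun i _ => sq_nonneg _
  clear h3 h1
  rw [h4, h6, h3s]
  clear h4 h6 h3s
  revert h2 h7
  generalize ∑ i, ‖k (some i) - G (some i)‖ ^ 2 = a1
  generalize ∑ i, (inner ℂ (G (some i)) (k (some i) - G (some i))).re = a2
  generalize ∑ i, ‖G (some i)‖ ^ 2 = a3
  generalize (inner ℂ z (k none - v)).re = a4
  generalize (inner ℂ v (k none - v)).re = a5
  generalize ‖v - f‖ ^ 2 = a6
  generalize ‖k none - v‖ ^ 2 = a7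
  intro h2 h7
  have : a4 = a5 + a2 := h2.symm
  subst this
  nlinarith [mul_nonneg hs.le h7]

lemma res_min_abs (hL : Sm L) {s : ℝ} (hs : 0 < s) (f v z : HH d) (hv : v = TT σ L hL z)
    (hz : v + s • (z - v) = f) : ∀ k ∈ Kc σ L hL,
    ‖v - f‖ ^ 2 + s * ∑ i, ‖kap σ L hL z (some i)‖ ^ 2 + ‖NN (k none) - v‖ ^ 2 ≤
      ‖NN (k none) - f‖ ^ 2 + s * ∑ i, ‖k (some i)‖ ^ 2 := by
  have c0 : Continuous fun k : GG d => NN (k none) := NN_cont.comp (pr d).continuous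
  have ci : ∀ i, Continuous fun k : GG d => k (some i) := fun i =>
    (PiLp.proj 2 (fun _ : Option (Fin d) => HH d) (some i) : GG d →L[ℂ] HH d).continuous
  refine Kc_induct hL (p := fun k =>
    ‖v - f‖ ^ 2 + s * ∑ i, ‖kap σ L hL z (some i)‖ ^ 2 + ‖NN (k none) - v‖ ^ 2 ≤
      ‖NN (k none) - f‖ ^ 2 + s * ∑ i, ‖k (some i)‖ ^ 2) ?_ ?_
  · apply isClosed_le <;> fun_prop
  · intro ψ h
    have ht := qe_tendsto (σ := σ) hL h
    refine le_of_tendsto_of_tendsto (tendsto_const_nhds.add ((ht.sub_const v).norm.pow 2))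
      (((ht.sub_const f).norm.pow 2).add_const _) (Eventually.of_forall fun n => ?_)
    have hn : 0 < 1 / ((n : ℝ) + 1) := by positivity
    refine (res_min hL hs f v z hv hz (kel_mem hL (qe_test hn h))).trans ?_
    rw [kel_none]
    refine add_le_add le_rfl (mul_le_mul_of_nonneg_left (Finset.sum_le_sum fun i _ => ?_) hs.le)
    exact pow_le_pow_left₀ (norm_nonneg _) (qe_energy hL hn h i) 2

lemma res_pos (hL : Sm L) {s : ℝ} (hs : 0 < s) {f : HH d} (hf : NN f = f) :
    NN (Rs (TT σ L hL) s f) = Rs (TT σ L hL) s f := by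
  obtain ⟨z, h1, h2⟩ := Rs_eq (TT_sa hL) (TT_sp (σ := σ) hL) hs f
  set v := Rs (TT σ L hL) s f
  have h3 := res_min_abs hL hs f v z h1 h2 _ (kap_mem hL z)
  rw [← TT_apply, ← h1] at h3
  have h4 : ‖NN v - f‖ ≤ ‖v - f‖ := by
    conv_lhs => rw [← hf]
    exact NN_lip _ _
  have h5 : ‖NN v - v‖ ^ 2 ≤ 0 := by
    nlinarith [norm_nonneg (NN v - f)]
  have h6 : ‖NN v - v‖ = 0 := by nlinarith [norm_nonneg (NN v - v)]
  exact sub_eq_zero.1 (norm_eq_zero.1 h6)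

lemma Y_pos (hL : Sm L) {t : ℝ} (ht : 0 < t) {f : HH d} (hf : NN f = f) :
    NN (Y (TT σ L hL) 0 t f) = Y (TT σ L hL) 0 t f := by
  have hC : IsClosed {f : HH d | NN f = f} := isClosed_eq NN_cont continuous_id
  exact Rs_closed (TT_sa hL) (TT_sp hL) hC (fun s hs f hf => res_pos hL hs hf) ht hf

end Pos
end FP

namespace FP

section Reg
variable {d : ℕ} {σ : ℝ} {L : Eu d → ℝ}

/-- the properties of `A^m e^{-tA} f` used for local regularity -/
structure Flow (σ : ℝ) (L : Eu d → ℝ) (y : ℕ → ℝ → HH d) : Prop where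
  bd : ∀ m, ∀ a : ℝ, 0 < a → ∃ C, ∀ t, a ≤ t → ‖y m t‖ ≤ C
  der : ∀ m t, 0 < t → HasDerivAt (y m) (-(y (m + 1) t)) t
  weak : ∀ ψ, Test ψ → ∀ m t, 0 < t →
    ∫ x, ψ x * rr σ L x * y (m + 1) t x = - ∫ x, gC σ L ψ x * rr σ L x * y m t x

/-- characters -/
noncomputable def ee (ξ x : Eu d) : ℂ := Complex.exp (((-2 * Real.pi * ⟪x, ξ⟫ : ℝ) : ℂ) * Complex.I)

lemma ee_norm (ξ x : Eu d) : ‖ee ξ x‖ = 1 := Complex.norm_exp_ofReal_mul_I _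

lemma ee_sm (ξ : Eu d) : Sm (ee ξ) := by
  unfold ee
  refine ContDiff.cexp (ContDiff.mul (Sm.ofReal ?_) contDiff_const)
  exact contDiff_const.mul (contDiff_id.inner ℝ contDiff_const)

lemma ee_cont : Continuous fun p : Eu d × Eu d => ee p.1 p.2 := by
  unfold ee
  fun_prop

lemma ee_pd (ξ x : Eu d) (i : Fin d) : pd i (ee ξ) x = (-2 * Real.pi * Complex.I * ξ i) * ee ξ x := by
  have h1 : HasFDerivAt (fun x : Eu d => -2 * Real.pi * ⟪x, ξ⟫) ((-2 * Real.pi) • (innerSL ℝ ξ)) x := by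
    have := ((innerSL ℝ ξ).hasFDerivAt (x := x)).const_mul (-2 * Real.pi)
    simpa [real_inner_comm] using this
  have h2 : HasFDerivAt (fun x : Eu d => (((-2 * Real.pi * ⟪x, ξ⟫ : ℝ)) : ℂ) * Complex.I)
      ((Complex.ofRealCLM ∘L ((-2 * Real.pi) • (innerSL ℝ ξ))).smulRight Complex.I) x :=
    (Complex.ofRealCLM.hasFDerivAt.comp x h1).mul_const' Complex.I
  unfold pd ee
  rw [h2.cexp.fderiv]
  have e : ⟪ξ, EuclideanSpace.single i (1 : ℝ)⟫ = ξ i := by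
    simp [EuclideanSpace.inner_single_right]
  simp only [smul_apply, ContinuousLinearMap.smulRight_apply, ContinuousLinearMap.comp_apply,
    innerSL_apply_apply, e, Complex.ofRealCLM_apply, smul_eq_mul]
  push_cast
  ring

lemma ee_pd_fun (ξ : Eu d) (i : Fin d) :
    pd i (ee ξ) = fun x => (-2 * Real.pi * Complex.I * ξ i) * ee ξ x := funext fun x => ee_pd ξ x i

lemma Test.ee {χ : Eu d → ℂ} (h : Test χ) (ξ : Eu d) : Test (fun x => χ x * ee ξ x) :=
  h.mul_right (ee_sm ξ)

/-- the first order coefficient -/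
noncomputable def th (σ : ℝ) (L : Eu d → ℝ) (χ : Eu d → ℂ) (j : Fin d) (x : Eu d) : ℂ :=
  2 * σ * pd j χ x - χ x * ((pd j L x : ℝ) : ℂ)

lemma Test.th (hL : Sm L) {χ : Eu d → ℂ} (h : Test χ) (j : Fin d) : Test (th σ L χ j) :=
  ((h.pd j).mul_left (f := fun _ => (2 * σ : ℂ)) contDiff_const).sub (h.mul_right (hL.pd j).ofReal)

lemma gC_ee {χ : Eu d → ℂ} (h : Test χ) (ξ x : Eu d) :
    gC σ L (fun x => χ x * ee ξ x) x = gC σ L χ x * ee ξ x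
      - 2 * Real.pi * Complex.I * ∑ j, (ξ j : ℂ) * (th σ L χ j x * ee ξ x)
      - 4 * Real.pi ^ 2 * σ * ((‖ξ‖ ^ 2 : ℝ) : ℂ) * (χ x * ee ξ x) := by
  have h1 : ∀ i, pd i (fun x => χ x * ee ξ x) =
      fun x => pd i χ x * ee ξ x + (-2 * Real.pi * Complex.I * ξ i) * (χ x * ee ξ x) := by
    intro i; funext x
    rw [pd_mul h.sm (ee_sm ξ), ee_pd]; ring
  have h2 : ∀ i, pd i (pd i (fun x => χ x * ee ξ x)) x =
      (pd i (pd i χ) x + 2 * (-2 * Real.pi * Complex.I * ξ i) * pd i χ x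
        - 4 * Real.pi ^ 2 * (ξ i : ℂ) ^ 2 * χ x) * ee ξ x := by
    intro i
    rw [h1 i, pd_add ((h.pd i).ee ξ).sm ((h.ee ξ).mul_left (f := fun _ => _) contDiff_const).sm,
      pd_const_mul (h.ee ξ).sm, h1 i, pd_mul (h.pd i).sm (ee_sm ξ), ee_pd]
    linear_combination (4 * Real.pi ^ 2 * (ξ i : ℂ) ^ 2 * χ x * ee ξ x) * Complex.I_sq
  unfold gC
  have h3 : ((‖ξ‖ ^ 2 : ℝ) : ℂ) = ∑ i, (ξ i : ℂ) ^ 2 := by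
    rw [EuclideanSpace.norm_sq_eq]; push_cast
    exact Finset.sum_congr rfl fun i _ => by
      rw [← Complex.ofReal_pow, Real.norm_eq_abs, sq_abs, Complex.ofReal_pow]
  rw [h3]
  simp only [h2]
  simp only [h1, th]
  simp only [mul_sub, sub_mul, mul_add, add_mul, Finset.sum_add_distrib, Finset.sum_sub_distrib,
    Finset.mul_sum, Finset.sum_mul]
  rw [← sub_eq_zero]
  simp only [← Finset.sum_sub_distrib, ← Finset.sum_add_distrib]
  refine Finset.sum_eq_zero fun i _ => ?_
  ring

/-- localised Fourier transform -/
noncomputable def BB (σ : ℝ) (L : Eu d → ℝ) (χ : Eu d → ℂ) (ξ : Eu d) (g : HH d) : ℂ :=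
  ∫ x, χ x * ee ξ x * rr σ L x * g x

lemma BB_inner (hL : Sm L) {χ : Eu d → ℂ} (h : Test χ) (ξ : Eu d) (g : HH d) :
    BB σ L χ ξ g = inner ℂ (emb σ L (fun x => star (χ x * ee ξ x))) g := by
  rw [inner_emb hL (h.ee ξ).conj]; simp [BB]

lemma pair_int (hL : Sm L) {χ : Eu d → ℂ} (h : Test χ) (g : HH d) :
    Integrable (fun x => χ x * rr σ L x * g x) := by
  have := (h.rr_mul (σ := σ) hL).memLp.integrable_mul (Lp.memLp g)
  refine this.congr (Eventually.of_forall fun x => ?_)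
  simp only [Pi.mul_apply]; ring

lemma BB_le (hL : Sm L) {χ : Eu d → ℂ} (h : Test χ) (ξ : Eu d) (g : HH d) :
    ‖BB σ L χ ξ g‖ ≤ ‖emb σ L χ‖ * ‖g‖ := by
  rw [BB_inner hL h]
  refine (norm_inner_le_norm _ _).trans (mul_le_mul_of_nonneg_right ?_ (norm_nonneg _))
  refine Lp.norm_le_norm_of_ae_le ?_
  filter_upwards [emb_coe (σ := σ) hL (h.ee ξ).conj, emb_coe (σ := σ) hL h] with x h1 h2
  rw [h1, h2]; simp [ee_norm]

lemma BB_rec {y : ℕ → ℝ → HH d} (hy : Flow σ L y) (hL : Sm L) {χ : Eu d → ℂ} (h : Test χ) (ξ : Eu d)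
    (m : ℕ) {t : ℝ} (ht : 0 < t) :
    4 * Real.pi ^ 2 * σ * ((‖ξ‖ ^ 2 : ℝ) : ℂ) * BB σ L χ ξ (y m t) =
      BB σ L (gC σ L χ) ξ (y m t) - 2 * Real.pi * Complex.I * ∑ j, (ξ j : ℂ) * BB σ L (th σ L χ j) ξ (y m t)
       + BB σ L χ ξ (y (m + 1) t) := by
  have h1 := hy.weak _ (h.ee ξ) m t ht
  have i1 := pair_int (σ := σ) hL ((h.gC hL σ).ee ξ) (y m t)
  have i2 := pair_int (σ := σ) hL (h.ee ξ) (y m t)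
  have i3 := fun j => pair_int (σ := σ) hL ((h.th (σ := σ) hL j).ee ξ) (y m t)
  have h2 : ∫ x, gC σ L (fun x => χ x * ee ξ x) x * rr σ L x * y m t x =
      BB σ L (gC σ L χ) ξ (y m t) - 2 * Real.pi * Complex.I * ∑ j, (ξ j : ℂ) * BB σ L (th σ L χ j) ξ (y m t)
      - 4 * Real.pi ^ 2 * σ * ((‖ξ‖ ^ 2 : ℝ) : ℂ) * BB σ L χ ξ (y m t) := by
    unfold BB
    simp only [← integral_const_mul]
    rw [← integral_finsetSum _ (fun j _ => (i3 j).const_mul _), ← integral_const_mul, ← integral_sub i1,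
      ← integral_sub]
    · congr 1; ext x
      rw [gC_ee h]
      have : ∑ j, (ξ j : ℂ) * (th σ L χ j x * ee ξ x * rr σ L x * y m t x) =
        (∑ j, (ξ j : ℂ) * (th σ L χ j x * ee ξ x)) * (rr σ L x * y m t x) := by
        rw [Finset.sum_mul]; exact Finset.sum_congr rfl fun j _ => by ring
      rw [this]; ring
    · exact i1.sub ((integrable_finsetSum _ fun j _ => (i3 j).const_mul _).const_mul _)
    · exact i2.const_mul _
    · exact ((integrable_finsetSum _ fun j _ => (i3 j).const_mul _).const_mul _)
  rw [h2] at h1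
  rw [show BB σ L χ ξ (y (m + 1) t) = _ from h1]
  ring

lemma boot {s b A1 A2 A3 C0 C1 C2 C3 κ : ℝ} (n : ℕ) (hs : 0 ≤ s) (hκ : 0 < κ) (hb : 0 ≤ b)
    (h : κ * s ^ 2 * b ≤ A1 + s * A2 + A3) (h0 : (1 + s) ^ n * b ≤ C0)
    (h1 : (1 + s) ^ n * A1 ≤ C1) (h2 : (1 + s) ^ n * A2 ≤ C2) (h3 : (1 + s) ^ n * A3 ≤ C3)
    (p1 : 0 ≤ C1) (p2 : 0 ≤ C2) (p3 : 0 ≤ C3) :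
    (1 + s) ^ (n + 1) * b ≤ 2 * C0 + 2 / κ * (C1 + C2 + C3) := by
  have q : 0 < (1 + s) ^ n := by positivity
  have e0 : 0 ≤ C0 := (mul_nonneg q.le hb).trans h0
  have h4 : (1 + s) ^ n * (κ * s ^ 2 * b) ≤ C1 + s * C2 + C3 := by
    have := mul_le_mul_of_nonneg_left h q.le
    nlinarith [mul_le_mul_of_nonneg_left h2 hs]
  have h5 : s ^ 2 * ((1 + s) ^ n * b) ≤ (C1 + s * C2 + C3) / κ := by
    rw [le_div_iff₀ hκ]; linarith
  have h6 : (1 + s) * ((1 + s) ^ (n + 1) * b) ≤ 2 * C0 + 2 * ((C1 + s * C2 + C3) / κ) := by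
    have : (1 + s) * ((1 + s) ^ (n + 1) * b) = (1 + s) ^ 2 * ((1 + s) ^ n * b) := by ring
    rw [this]
    nlinarith [sq_nonneg (1 - s), mul_nonneg (sq_nonneg (1 - s)) (mul_nonneg q.le hb)]
  have h7 : (C1 + s * C2 + C3) / κ ≤ (1 + s) * ((C1 + C2 + C3) / κ) := by
    rw [← mul_div_assoc]
    apply div_le_div_of_nonneg_right _ hκ.le
    nlinarith [mul_nonneg hs p1, mul_nonneg hs p3]
  have h8 : (1 + s) * ((1 + s) ^ (n + 1) * b) ≤ (1 + s) * (2 * C0 + 2 / κ * (C1 + C2 + C3)) := by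
    have : (1 + s) * (2 * C0 + 2 / κ * (C1 + C2 + C3)) = 2 * C0 + s * (2 * C0) +
      2 * ((1 + s) * ((C1 + C2 + C3) / κ)) := by ring
    rw [this]; nlinarith [mul_nonneg hs e0]
  exact le_of_mul_le_mul_left h8 (by positivity)

lemma BB_decay {y : ℕ → ℝ → HH d} (hσ : 0 < σ) (hy : Flow σ L y) (hL : Sm L) (n : ℕ) :
    ∀ χ, Test χ → ∀ m, ∀ a : ℝ, 0 < a → ∃ C, 0 ≤ C ∧ ∀ t, a ≤ t → ∀ ξ : Eu d,
      (1 + ‖ξ‖) ^ n * ‖BB σ L χ ξ (y m t)‖ ≤ C := by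
  induction n with
  | zero =>
    intro χ h m a ha
    obtain ⟨C, hC⟩ := hy.bd m a ha
    refine ⟨‖emb σ L χ‖ * C, mul_nonneg (norm_nonneg _) ((norm_nonneg _).trans (hC a le_rfl)), ?_⟩
    intro t ht ξ
    rw [pow_zero, one_mul]
    exact (BB_le hL h ξ _).trans (mul_le_mul_of_nonneg_left (hC t ht) (norm_nonneg _))
  | succ n ih =>
    intro χ h m a ha
    obtain ⟨C0, p0, h0⟩ := ih χ h m a ha
    obtain ⟨C1, p1, h1⟩ := ih _ (h.gC hL σ) m a ha
    choose C2 p2 h2 using fun j => ih _ (h.th (σ := σ) hL j) m a ha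
    obtain ⟨C3, p3, h3⟩ := ih χ h (m + 1) a ha
    set κ := 4 * Real.pi ^ 2 * σ
    have hκ : 0 < κ := by positivity
    have s2 : 0 ≤ ∑ j, 2 * Real.pi * C2 j := Finset.sum_nonneg fun j _ =>
      mul_nonneg (by positivity) (p2 j)
    refine ⟨2 * C0 + 2 / κ * (C1 + (∑ j, 2 * Real.pi * C2 j) + C3), by positivity, ?_⟩
    intro t ht ξ
    refine boot (A1 := ‖BB σ L (gC σ L χ) ξ (y m t)‖)
      (A2 := ∑ j, 2 * Real.pi * ‖BB σ L (th σ L χ j) ξ (y m t)‖)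
      (A3 := ‖BB σ L χ ξ (y (m + 1) t)‖)
      n (norm_nonneg ξ) hκ (norm_nonneg _) ?_ (h0 t ht ξ) (h1 t ht ξ) ?_ (h3 t ht ξ) p1 s2 p3
    · have := congrArg norm (BB_rec hy hL h ξ m (ha.trans_le ht))
      have e1 : ‖4 * Real.pi ^ 2 * σ * ((‖ξ‖ ^ 2 : ℝ) : ℂ) * BB σ L χ ξ (y m t)‖ =
          κ * ‖ξ‖ ^ 2 * ‖BB σ L χ ξ (y m t)‖ := by
        simp [κ, abs_of_pos hσ, abs_of_pos Real.pi_pos]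
      rw [e1] at this
      rw [this]
      refine (norm_add_le _ _).trans (add_le_add ((norm_sub_le _ _).trans (add_le_add le_rfl ?_)) le_rfl)
      rw [norm_mul, Finset.mul_sum]
      have e2 : ‖(2 * Real.pi * Complex.I : ℂ)‖ = 2 * Real.pi := by
        simp [abs_of_pos Real.pi_pos]
      rw [e2]
      refine (mul_le_mul_of_nonneg_left (norm_sum_le _ _) (by positivity)).trans ?_
      rw [Finset.mul_sum]
      refine Finset.sum_le_sum fun j _ => ?_
      rw [norm_mul, Complex.norm_real]
      have := PiLp.norm_apply_le ξ j
      have e3 := mul_le_mul_of_nonneg_right this (norm_nonneg (BB σ L (th σ L χ j) ξ (y m t)))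
      nlinarith [Real.pi_pos]
    · rw [Finset.mul_sum]
      refine Finset.sum_le_sum fun j _ => ?_
      have := h2 j t ht ξ
      nlinarith [Real.pi_pos]

end Reg
end FP

namespace FP

section Smooth
variable {d : ℕ} {σ : ℝ} {L : Eu d → ℝ}

lemma fderiv_eq_sum {F : Type*} [NormedAddCommGroup F] [NormedSpace ℝ F] (f : Eu d → F) (x v : Eu d) :
    fderiv ℝ f x v = ∑ j, v j • pd j f x := by
  have hv : v = ∑ j, v j • EuclideanSpace.single j (1 : ℝ) := by
    ext i
    simp [Finset.sum_apply, Pi.single_apply]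
  conv_lhs => rw [hv]
  rw [map_sum]
  simp [pd]

lemma BB_cont (hL : Sm L) {χ : Eu d → ℂ} (h : Test χ) (g : HH d) :
    Continuous fun ξ => BB σ L χ ξ g := by
  unfold BB
  have hi := pair_int (σ := σ) hL h g
  refine continuous_of_dominated (bound := fun x => ‖χ x * rr σ L x * g x‖) ?_ ?_ hi.norm ?_
  · intro ξ
    exact (pair_int (σ := σ) hL (h.ee ξ) g).aestronglyMeasurable
  · intro ξ
    refine Eventually.of_forall fun x => le_of_eq ?_
    simp [ee_norm]
  · refine Eventually.of_forall fun x => ?_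
    have : Continuous fun ξ => ee ξ x := ee_cont.comp (by fun_prop : Continuous fun ξ : Eu d => (ξ, x))
    fun_prop

/-- functions of polynomial growth -/
def Pol (p : Eu d → ℂ) : Prop := Continuous p ∧ ∃ (c : ℝ) (N : ℕ), 0 ≤ c ∧ ∀ ξ, ‖p ξ‖ ≤ c * (1 + ‖ξ‖) ^ N

lemma Pol.one : Pol (fun _ : Eu d => (1 : ℂ)) := ⟨continuous_const, 1, 0, by simp, by simp⟩

lemma Pol.step {p : Eu d → ℂ} (hp : Pol p) (j : Fin d) :
    Pol (fun ξ => 2 * Real.pi * Complex.I * ξ j * p ξ) := by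
  obtain ⟨hc, c, N, h0, h⟩ := hp
  refine ⟨by fun_prop, 2 * Real.pi * c, N + 1, by positivity, fun ξ => ?_⟩
  have h1 : ‖ξ j‖ ≤ 1 + ‖ξ‖ := (PiLp.norm_apply_le ξ j).trans (by linarith)
  have h2 : ‖2 * Real.pi * Complex.I * ξ j * p ξ‖ = 2 * Real.pi * (‖ξ j‖ * ‖p ξ‖) := by
    simp [abs_of_pos Real.pi_pos]; ring
  rw [h2, pow_succ]
  have := mul_le_mul h1 (h ξ) (norm_nonneg _) (by positivity)
  have := mul_le_mul_of_nonneg_left this (by positivity : 0 ≤ 2 * Real.pi)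
  refine this.trans (le_of_eq (by ring))

/-- integrands of the localised inverse Fourier transform -/
noncomputable def FF (σ : ℝ) (L : Eu d → ℝ) (y : ℕ → ℝ → HH d) (χ p : Eu d → ℂ) (m : ℕ)
    (q : ℝ × Eu d) (ξ : Eu d) : ℂ := ee (-ξ) q.2 * p ξ * BB σ L χ ξ (y m q.1)

noncomputable def VV (σ : ℝ) (L : Eu d → ℝ) (y : ℕ → ℝ → HH d) (χ p : Eu d → ℂ) (m : ℕ)
    (q : ℝ × Eu d) : ℂ := ∫ ξ, FF σ L y χ p m q ξ

lemma FF_cont (hL : Sm L) (y : ℕ → ℝ → HH d) {χ p : Eu d → ℂ} (h : Test χ) (hp : Pol p) (m : ℕ)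
    (q : ℝ × Eu d) : Continuous (FF σ L y χ p m q) := by
  unfold FF
  obtain ⟨t, x⟩ := q
  have h0 : Continuous fun ξ => ee ξ x := ee_cont.comp (by fun_prop : Continuous fun ξ : Eu d => (ξ, x))
  have h1 : Continuous fun ξ => ee (-ξ) x := h0.comp continuous_neg
  have h2 := BB_cont (σ := σ) hL h (y m t)
  exact (h1.mul hp.1).mul h2

lemma FF_dom {y : ℕ → ℝ → HH d} (hσ : 0 < σ) (hy : Flow σ L y) (hL : Sm L) {χ p : Eu d → ℂ}
    (h : Test χ) (hp : Pol p) (m : ℕ) {a : ℝ} (ha : 0 < a) :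
    ∃ b : Eu d → ℝ, Integrable b ∧ ∀ q : ℝ × Eu d, a ≤ q.1 → ∀ ξ, ‖FF σ L y χ p m q ξ‖ ≤ b ξ := by
  obtain ⟨hc, c, N, h0, hN⟩ := hp
  obtain ⟨C, hC0, hC⟩ := BB_decay hσ hy hL (N + (d + 1)) χ h m a ha
  refine ⟨fun ξ => c * C * (1 + ‖ξ‖) ^ (-((d + 1 : ℕ) : ℝ)), ?_, ?_⟩
  · refine Integrable.const_mul (integrable_one_add_norm ?_) _
    simp
  · intro q hq ξ
    have h1 := hC q.1 hq ξ
    have h2 := hN ξ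
    unfold FF
    beta_reduce
    rw [norm_mul, norm_mul, ee_norm, one_mul, Real.rpow_neg (by positivity), Real.rpow_natCast]
    have hs : 0 < 1 + ‖ξ‖ := by positivity
    rw [← div_eq_mul_inv, le_div_iff₀ (by positivity)]
    calc ‖p ξ‖ * ‖BB σ L χ ξ (y m q.1)‖ * (1 + ‖ξ‖) ^ (d + 1)
        ≤ c * (1 + ‖ξ‖) ^ N * ‖BB σ L χ ξ (y m q.1)‖ * (1 + ‖ξ‖) ^ (d + 1) := by gcongr
      _ = c * ((1 + ‖ξ‖) ^ (N + (d + 1)) * ‖BB σ L χ ξ (y m q.1)‖) := by rw [pow_add]; ring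
      _ ≤ c * C := by gcongr

lemma FF_int {y : ℕ → ℝ → HH d} (hσ : 0 < σ) (hy : Flow σ L y) (hL : Sm L) {χ p : Eu d → ℂ}
    (h : Test χ) (hp : Pol p) (m : ℕ) {q : ℝ × Eu d} (hq : 0 < q.1) :
    Integrable (FF σ L y χ p m q) := by
  obtain ⟨b, hb, hd⟩ := FF_dom hσ hy hL h hp m hq
  exact hb.mono' (FF_cont hL y h hp m q).aestronglyMeasurable
    (Eventually.of_forall fun ξ => hd q le_rfl ξ)

/-- time component of the derivative -/
noncomputable def A0 (d : ℕ) : ℂ →L[ℝ] ((ℝ × Eu d) →L[ℝ] ℂ) :=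
  ContinuousLinearMap.smulRightL ℝ _ _ (ContinuousLinearMap.fst ℝ ℝ (Eu d))

/-- space components of the derivative -/
noncomputable def Aj (d : ℕ) (j : Fin d) : ℂ →L[ℝ] ((ℝ × Eu d) →L[ℝ] ℂ) :=
  ContinuousLinearMap.smulRightL ℝ _ _
    ((EuclideanSpace.proj j : Eu d →L[ℝ] ℝ) ∘L ContinuousLinearMap.snd ℝ ℝ (Eu d))

lemma A0_apply (c : ℂ) (v : ℝ × Eu d) : A0 d c v = v.1 • c := rfl
lemma Aj_apply (j : Fin d) (c : ℂ) (v : ℝ × Eu d) : Aj d j c v = v.2 j • c := rfl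

lemma BB_hasDerivAt {y : ℕ → ℝ → HH d} (hy : Flow σ L y) (hL : Sm L) {χ : Eu d → ℂ} (h : Test χ)
    (ξ : Eu d) (m : ℕ) {t : ℝ} (ht : 0 < t) :
    HasDerivAt (fun s => BB σ L χ ξ (y m s)) (-(BB σ L χ ξ (y (m + 1) t))) t := by
  simp only [BB_inner hL h]
  rw [← inner_neg_right]
  exact (((innerSL ℂ (emb σ L (fun x => star (χ x * ee ξ x)))).restrictScalars ℝ).hasFDerivAt).comp_hasDerivAt
    t (hy.der m t ht)

lemma FF_hasFDerivAt {y : ℕ → ℝ → HH d} (hy : Flow σ L y) (hL : Sm L) {χ : Eu d → ℂ} (p : Eu d → ℂ)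
    (h : Test χ) (ξ : Eu d) (m : ℕ) {q : ℝ × Eu d} (hq : 0 < q.1) :
    HasFDerivAt (fun q => FF σ L y χ p m q ξ)
      (A0 d (-(FF σ L y χ p (m + 1) q ξ)) +
        ∑ j, Aj d j (FF σ L y χ (fun ξ => 2 * Real.pi * Complex.I * ξ j * p ξ) m q ξ)) q := by
  have h1 : HasFDerivAt (fun q : ℝ × Eu d => ee (-ξ) q.2) _ q :=
    ((ee_sm (-ξ)).diff q.2).hasFDerivAt.comp q hasFDerivAt_snd
  have h2 : HasFDerivAt (fun q : ℝ × Eu d => BB σ L χ ξ (y m q.1)) _ q :=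
    (BB_hasDerivAt hy hL h ξ m hq).hasFDerivAt.comp q hasFDerivAt_fst
  have h3 := (h1.mul_const (p ξ)).mul h2
  refine h3.congr_fderiv ?_
  refine ContinuousLinearMap.ext fun v => ?_
  simp only [add_apply, smul_apply, ContinuousLinearMap.comp_apply, sum_apply, A0_apply, Aj_apply]
  simp only [ContinuousLinearMap.coe_snd', ContinuousLinearMap.coe_fst', fderiv_eq_sum, ee_pd, FF]
  simp only [ContinuousLinearMap.toSpanSingleton_apply, Complex.real_smul, smul_eq_mul, Finset.mul_sum, Finset.sum_mul]
  congr 1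
  · ring
  · refine Finset.sum_congr rfl fun j _ => ?_
    rw [PiLp.neg_apply]; push_cast; ring

lemma VV_hasFDerivAt {y : ℕ → ℝ → HH d} (hσ : 0 < σ) (hy : Flow σ L y) (hL : Sm L) {χ p : Eu d → ℂ}
    (h : Test χ) (hp : Pol p) (m : ℕ) {q : ℝ × Eu d} (hq : 0 < q.1) :
    HasFDerivAt (VV σ L y χ p m)
      (A0 d (-(VV σ L y χ p (m + 1) q)) +
        ∑ j, Aj d j (VV σ L y χ (fun ξ => 2 * Real.pi * Complex.I * ξ j * p ξ) m q)) q := by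
  set F' : ℝ × Eu d → Eu d → ((ℝ × Eu d) →L[ℝ] ℂ) := fun q ξ =>
    A0 d (-(FF σ L y χ p (m + 1) q ξ)) +
        ∑ j, Aj d j (FF σ L y χ (fun ξ => 2 * Real.pi * Complex.I * ξ j * p ξ) m q ξ) with hF'
  have ha : 0 < q.1 / 2 := by positivity
  obtain ⟨b0, hb0, hd0⟩ := FF_dom hσ hy hL h hp (m + 1) ha
  choose b hb hd using fun j => FF_dom hσ hy hL h (hp.step j) m ha
  have key := hasFDerivAt_integral_of_dominated_of_fderiv_le (𝕜 := ℝ) (μ := (volume : Measure (Eu d)))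
    (F := fun q ξ => FF σ L y χ p m q ξ) (F' := F') (x₀ := q)
    (s := {q' : ℝ × Eu d | q.1 / 2 < q'.1})
    (bound := fun ξ => ‖A0 d‖ * b0 ξ + ∑ j, ‖Aj d j‖ * b j ξ) ?_ ?_ ?_ ?_ ?_ ?_ ?_
  · have e : ∫ ξ, F' q ξ = A0 d (-(VV σ L y χ p (m + 1) q)) +
        ∑ j, Aj d j (VV σ L y χ (fun ξ => 2 * Real.pi * Complex.I * ξ j * p ξ) m q) := by
      have i0 : Integrable fun ξ => A0 d (-(FF σ L y χ p (m + 1) q ξ)) :=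
        (A0 d).integrable_comp (FF_int hσ hy hL h hp (m + 1) hq).neg
      have ij : ∀ j, Integrable fun ξ =>
          Aj d j (FF σ L y χ (fun ξ => 2 * Real.pi * Complex.I * ξ j * p ξ) m q ξ) := fun j =>
        (Aj d j).integrable_comp (FF_int hσ hy hL h (hp.step j) m hq)
      have n0 : Integrable (fun ξ => -(FF σ L y χ p (m + 1) q ξ)) :=
        (FF_int hσ hy hL h hp (m + 1) hq).neg
      rw [hF']
      beta_reduce
      rw [integral_add i0 (integrable_finsetSum _ fun j _ => ij j), integral_finsetSum _ fun j _ => ij j,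
        ContinuousLinearMap.integral_comp_comm _ n0, integral_neg]
      congr 1
      refine Finset.sum_congr rfl fun j _ => ?_
      rw [ContinuousLinearMap.integral_comp_comm _ (FF_int hσ hy hL h (hp.step j) m hq)]
      rfl
    rw [e] at key
    exact key
  · exact (isOpen_lt continuous_const continuous_fst).mem_nhds (by simp; linarith)
  · exact Eventually.of_forall fun q => (FF_cont hL y h hp m q).aestronglyMeasurable
  · exact FF_int hσ hy hL h hp m hq
  · have c0 := FF_cont (σ := σ) hL y h hp (m + 1) q
    have cj := fun j => FF_cont (σ := σ) hL y h (hp.step j) m q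
    refine Continuous.aestronglyMeasurable ?_
    exact ((A0 d).continuous.comp c0.neg).add
      (continuous_finsetSum _ fun j _ => (Aj d j).continuous.comp (cj j))
  · refine Eventually.of_forall fun ξ q' hq' => ?_
    refine (norm_add_le _ _).trans (add_le_add ?_ ((norm_sum_le _ _).trans (Finset.sum_le_sum fun j _ => ?_)))
    · refine ((A0 d).le_opNorm _).trans (mul_le_mul_of_nonneg_left ?_ (norm_nonneg _))
      rw [norm_neg]
      exact hd0 q' (le_of_lt hq') ξ
    · exact ((Aj d j).le_opNorm _).trans (mul_le_mul_of_nonneg_left (hd j q' (le_of_lt hq') ξ) (norm_nonneg _))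
  · exact (hb0.const_mul _).add (integrable_finsetSum _ fun j _ => (hb j).const_mul _)
  · refine Eventually.of_forall fun ξ q' hq' => ?_
    exact FF_hasFDerivAt hy hL p h ξ m (ha.trans hq')

lemma open_half : IsOpen (Set.Ioi (0 : ℝ) ×ˢ (Set.univ : Set (Eu d))) := isOpen_Ioi.prod isOpen_univ

lemma VV_contDiff {y : ℕ → ℝ → HH d} (hσ : 0 < σ) (hy : Flow σ L y) (hL : Sm L) {χ : Eu d → ℂ}
    (h : Test χ) (n : ℕ) : ∀ p : Eu d → ℂ, Pol p → ∀ m,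
    ContDiffOn ℝ n (VV σ L y χ p m) (Set.Ioi (0 : ℝ) ×ˢ Set.univ) := by
  induction n with
  | zero =>
    intro p hp m
    rw [Nat.cast_zero, contDiffOn_zero]
    intro q hq
    exact (VV_hasFDerivAt hσ hy hL h hp m hq.1).continuousAt.continuousWithinAt
  | succ n ih =>
    intro p hp m
    rw [Nat.cast_succ, contDiffOn_succ_iff_fderiv_of_isOpen open_half]
    refine ⟨fun q hq => (VV_hasFDerivAt hσ hy hL h hp m hq.1).differentiableAt.differentiableWithinAt,
      by simp, ?_⟩
    refine ContDiffOn.congr ?_ (fun q hq => (VV_hasFDerivAt hσ hy hL h hp m hq.1).fderiv)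
    refine ContDiffOn.add ?_ (ContDiffOn.sum fun j _ => ?_)
    · exact (A0 d).contDiff.comp_contDiffOn (ih p hp (m + 1)).neg
    · exact (Aj d j).contDiff.comp_contDiffOn (ih _ (hp.step j) m)

lemma VV_smooth {y : ℕ → ℝ → HH d} (hσ : 0 < σ) (hy : Flow σ L y) (hL : Sm L) {χ : Eu d → ℂ}
    (h : Test χ) (m : ℕ) :
    ContDiffOn ℝ (⊤ : ℕ∞) (VV σ L y χ (fun _ => 1) m) (Set.Ioi (0 : ℝ) ×ˢ Set.univ) :=
  contDiffOn_infty.2 fun n => VV_contDiff hσ hy hL h n _ Pol.one m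

open FourierTransform in
lemma fourier_swap {f g : Eu d → ℂ} (hf : Integrable f) (hg : Integrable g) :
    ∫ x, 𝓕 f x * g x = ∫ x, f x * 𝓕 g x := by
  have := VectorFourier.integral_fourierIntegral_smul_eq_flip (e := Real.fourierChar)
    (L := innerₗ (Eu d)) (μ := volume) (ν := volume) (f := f) (g := g) Real.continuous_fourierChar
    continuous_inner hf hg
  rw [flip_innerₗ] at this
  exact this

open FourierTransform in
lemma inversion_ae {f : Eu d → ℂ} (hf : Integrable f) (hF : Integrable (𝓕 f)) (hc : Continuous (𝓕⁻ (𝓕 f))) :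
    𝓕⁻ (𝓕 f) =ᵐ[volume] f := by
  refine ae_eq_of_integral_contDiff_smul_eq hc.locallyIntegrable hf.locallyIntegrable ?_
  intro g hg hgc
  have hgt : Test (fun x => ((g x : ℝ) : ℂ)) :=
    ⟨Sm.ofReal hg, hgc.comp_left (g := fun x : ℝ => (x : ℂ)) (by simp)⟩
  set G : SchwartzMap (Eu d) ℂ := hgt.cs.toSchwartzMap hgt.sm
  set G' : SchwartzMap (Eu d) ℂ := 𝓕⁻ G with hG'
  have hG : ∀ x, G x = ((g x : ℝ) : ℂ) := fun x => rfl
  have hGn : Integrable (fun x => G (-x)) := G.integrable.comp_neg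
  have e1 : 𝓕 (fun x => G (-x)) = ⇑G' := by
    rw [hG', ← Real.fourierInv_eq_fourier_comp_neg, SchwartzMap.fourierInv_coe]
  simp only [Complex.real_smul, ← hG]
  calc ∫ x, G x * 𝓕⁻ (𝓕 f) x = ∫ x, G x * 𝓕 (𝓕 f) (-x) := by
        simp only [Real.fourierInv_eq_fourier_neg]
    _ = ∫ x, G (-x) * 𝓕 (𝓕 f) x := by
        rw [← integral_neg_eq_self]; simp
    _ = ∫ x, 𝓕 (fun x => G (-x)) x * 𝓕 f x := (fourier_swap hGn hF).symm
    _ = ∫ x, 𝓕 f x * G' x := by rw [e1]; congr 1; ext x; ring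
    _ = ∫ x, f x * 𝓕 (⇑G') x := fourier_swap hf (SchwartzMap.integrable _)
    _ = ∫ x, G x * f x := by
        rw [← SchwartzMap.fourier_coe, hG', FourierTransform.fourier_fourierInv_eq]
        congr 1; ext x; ring

open FourierTransform in
lemma BB_fourier (χ : Eu d → ℂ) (ξ : Eu d) (g : HH d) :
    BB σ L χ ξ g = 𝓕 (fun x => χ x * rr σ L x * g x) ξ := by
  rw [Real.fourier_eq']
  unfold BB ee
  congr 1; ext x
  rw [smul_eq_mul]; ring

open FourierTransform in
lemma VV_fourier (y : ℕ → ℝ → HH d) (χ : Eu d → ℂ) (m : ℕ) (t : ℝ) (x : Eu d) :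
    VV σ L y χ (fun _ => 1) m (t, x) = 𝓕⁻ (𝓕 (fun x => χ x * rr σ L x * y m t x)) x := by
  rw [Real.fourierInv_eq']
  unfold VV FF ee
  congr 1; ext ξ
  rw [smul_eq_mul, ← BB_fourier, inner_neg_right, real_inner_comm]
  simp

lemma VV_ae {y : ℕ → ℝ → HH d} (hσ : 0 < σ) (hy : Flow σ L y) (hL : Sm L) {χ : Eu d → ℂ}
    (h : Test χ) (m : ℕ) {t : ℝ} (ht : 0 < t) :
    (fun x => VV σ L y χ (fun _ => 1) m (t, x)) =ᵐ[volume] fun x => χ x * rr σ L x * y m t x := by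
  have hi := pair_int (σ := σ) hL h (y m t)
  have h1 : Integrable (FourierTransform.fourier (fun x => χ x * rr σ L x * y m t x) : Eu d → ℂ) := by
    have := FF_int hσ hy hL h Pol.one m (q := (t, 0)) ht
    refine this.congr (Eventually.of_forall fun ξ => ?_)
    simp [FF, ee, BB_fourier]
  have hc : Continuous fun x => VV σ L y χ (fun _ => 1) m (t, x) := by
    rw [continuous_iff_continuousAt]
    intro x
    exact ContinuousAt.comp (g := VV σ L y χ (fun _ => 1) m) (f := fun x => (t, x))
      (VV_hasFDerivAt hσ hy hL h Pol.one m (q := (t, x)) ht).continuousAt (by fun_prop)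
  have e := funext fun x => VV_fourier (σ := σ) (L := L) y χ m t x
  rw [e] at hc ⊢
  exact inversion_ae hi h1 hc

end Smooth
end FP

namespace FP

section Glue
variable {d : ℕ} {σ : ℝ} {L : Eu d → ℝ}

lemma weak_ae {f g : Eu d → ℂ} (hf : LocallyIntegrable f) (hg : LocallyIntegrable g)
    (h : ∀ ψ, Test ψ → ∫ x, ψ x * f x = ∫ x, ψ x * g x) : f =ᵐ[volume] g := by
  refine ae_eq_of_integral_contDiff_smul_eq hf hg ?_
  intro ψ hψ hc
  simp only [Complex.real_smul]
  exact h _ ⟨Sm.ofReal hψ, hc.comp_left (g := fun x : ℝ => (x : ℂ)) (by simp)⟩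

lemma eq_of_ae_cont {f g : Eu d → ℂ} (hf : Continuous f) (hg : Continuous g) (h : f =ᵐ[volume] g) :
    f = g := (Continuous.ae_eq_iff_eq volume hf hg).1 h

/-- the solution and its generator iterates -/
noncomputable def Phi (σ : ℝ) (L : Eu d → ℝ) (y : ℕ → ℝ → HH d) (m : ℕ) (t : ℝ) (x : Eu d) : ℂ :=
  VV σ L y (bump d (‖x‖ + 1)) (fun _ => 1) m (t, x) / wt σ L x

lemma wt_ne (x : Eu d) : wt σ L x ≠ 0 := by
  unfold wt
  exact_mod_cast (Real.exp_pos _).ne'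

lemma rr_ne (x : Eu d) : (rr σ L x : ℂ) ≠ 0 := by
  exact_mod_cast (rr_pos σ L x).ne'

lemma VV_contx {y : ℕ → ℝ → HH d} (hσ : 0 < σ) (hy : Flow σ L y) (hL : Sm L) {χ : Eu d → ℂ}
    (h : Test χ) (m : ℕ) {t : ℝ} (ht : 0 < t) :
    Continuous fun x => VV σ L y χ (fun _ => 1) m (t, x) := by
  rw [continuous_iff_continuousAt]
  intro x
  exact ContinuousAt.comp (g := VV σ L y χ (fun _ => 1) m) (f := fun x => (t, x))
    (VV_hasFDerivAt hσ hy hL h Pol.one m (q := (t, x)) ht).continuousAt (by fun_prop)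

lemma VV_bump_eq {y : ℕ → ℝ → HH d} (hσ : 0 < σ) (hy : Flow σ L y) (hL : Sm L) (m : ℕ) {t : ℝ}
    (ht : 0 < t) {R S : ℝ} {x : Eu d} (hR : ‖x‖ < R) (hS : ‖x‖ < S) :
    VV σ L y (bump d R) (fun _ => 1) m (t, x) = VV σ L y (bump d S) (fun _ => 1) m (t, x) := by
  have hU : IsOpen {x : Eu d | ‖x‖ < min R S} := isOpen_lt continuous_norm continuous_const
  have key : (fun x => VV σ L y (bump d R) (fun _ => 1) m (t, x)) =ᵐ[volume.restrict {x : Eu d | ‖x‖ < min R S}]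
      (fun x => VV σ L y (bump d S) (fun _ => 1) m (t, x)) := by
    rw [Filter.EventuallyEq, ae_restrict_iff' hU.measurableSet]
    filter_upwards [VV_ae hσ hy hL (bump_test R) m ht, VV_ae hσ hy hL (bump_test S) m ht] with z h1 h2 hz
    have hz' : ‖z‖ < min R S := hz
    rw [h1, h2, bump_one (hz'.le.trans (min_le_left _ _)), bump_one (hz'.le.trans (min_le_right _ _))]
  have := MeasureTheory.Measure.eqOn_open_of_ae_eq key hU (VV_contx hσ hy hL (bump_test R) m ht).continuousOn
    (VV_contx hσ hy hL (bump_test S) m ht).continuousOn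
  exact this (lt_min hR hS)

lemma Phi_eq {y : ℕ → ℝ → HH d} (hσ : 0 < σ) (hy : Flow σ L y) (hL : Sm L) (m : ℕ) {t : ℝ}
    (ht : 0 < t) {R : ℝ} {x : Eu d} (hR : ‖x‖ < R) :
    Phi σ L y m t x = VV σ L y (bump d R) (fun _ => 1) m (t, x) / wt σ L x := by
  unfold Phi
  rw [VV_bump_eq hσ hy hL m ht (by linarith : ‖x‖ < ‖x‖ + 1) hR]

lemma Phi_smooth {y : ℕ → ℝ → HH d} (hσ : 0 < σ) (hy : Flow σ L y) (hL : Sm L) (m : ℕ) :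
    ContDiffOn ℝ (⊤ : ℕ∞) (fun q : ℝ × Eu d => Phi σ L y m q.1 q.2) (Set.Ioi (0 : ℝ) ×ˢ Set.univ) := by
  intro q hq
  have h1 : ContDiffAt ℝ (⊤ : ℕ∞) (VV σ L y (bump d (‖q.2‖ + 1)) (fun _ => 1) m) q :=
    (VV_smooth hσ hy hL (bump_test _) m).contDiffAt (open_half.mem_nhds hq)
  have h2 : ContDiffAt ℝ (⊤ : ℕ∞) (fun q : ℝ × Eu d => (wt σ L q.2)⁻¹) q :=
    (((wt_sm hL σ).comp contDiff_snd).contDiffAt).inv (wt_ne _)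
  refine ((h1.mul h2).congr_of_eventuallyEq ?_).contDiffWithinAt
  have hU : IsOpen {p : ℝ × Eu d | 0 < p.1 ∧ ‖p.2‖ < ‖q.2‖ + 1} :=
    (isOpen_lt continuous_const continuous_fst).inter (isOpen_lt (continuous_norm.comp continuous_snd) continuous_const)
  filter_upwards [hU.mem_nhds ⟨hq.1, by linarith⟩] with p hp
  rw [Phi_eq hσ hy hL m hp.1 hp.2, div_eq_mul_inv]

lemma Phi_sm {y : ℕ → ℝ → HH d} (hσ : 0 < σ) (hy : Flow σ L y) (hL : Sm L) (m : ℕ) {t : ℝ}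
    (ht : 0 < t) : Sm (Phi σ L y m t) := by
  rw [Sm, ← contDiffOn_univ]
  exact (Phi_smooth hσ hy hL m).comp (f := fun x : Eu d => (t, x))
    (contDiff_const.prodMk contDiff_id).contDiffOn (fun x _ => ⟨ht, trivial⟩)

lemma Phi_ae {y : ℕ → ℝ → HH d} (hσ : 0 < σ) (hy : Flow σ L y) (hL : Sm L) (m : ℕ) {t : ℝ}
    (ht : 0 < t) : (y m t : Eu d → ℂ) =ᵐ[volume] fun x => rr σ L x * Phi σ L y m t x := by
  have h := ae_all_iff.2 fun n : ℕ => VV_ae hσ hy hL (bump_test (d := d) n) m ht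
  filter_upwards [h] with x hx
  obtain ⟨n, hn⟩ := exists_nat_gt ‖x‖
  rw [Phi_eq hσ hy hL m ht hn, hx n, bump_one hn.le, wt_eq]
  have := rr_ne (σ := σ) (L := L) x
  field_simp

lemma Phi_deriv {y : ℕ → ℝ → HH d} (hσ : 0 < σ) (hy : Flow σ L y) (hL : Sm L) (m : ℕ) {t : ℝ}
    (ht : 0 < t) (x : Eu d) :
    HasDerivAt (fun s => Phi σ L y m s x) (-(Phi σ L y (m + 1) t x)) t := by
  have h1 := VV_hasFDerivAt hσ hy hL (bump_test (‖x‖ + 1)) Pol.one m (q := (t, x)) ht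
  have h2 : HasDerivAt (fun s : ℝ => (s, x)) ((1 : ℝ), (0 : Eu d)) t :=
    (hasDerivAt_id t).prodMk (hasDerivAt_const t x)
  have h3 := (h1.comp_hasDerivAt t h2).div_const (wt σ L x)
  refine h3.congr_deriv ?_
  simp only [add_apply, sum_apply, A0_apply, Aj_apply]
  simp [Phi, neg_div]

lemma Phi_gC {y : ℕ → ℝ → HH d} (hσ : 0 < σ) (hy : Flow σ L y) (hL : Sm L) (m : ℕ) {t : ℝ}
    (ht : 0 < t) : gC σ L (Phi σ L y m t) = fun x => -(Phi σ L y (m + 1) t x) := by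
  have s0 := Phi_sm hσ hy hL m ht
  have s1 := Phi_sm hσ hy hL (m + 1) ht
  have sw := wt_sm hL σ
  have sg := Sm.gC hL σ s0
  have c1 : Continuous fun x => gC σ L (Phi σ L y m t) x * wt σ L x := sg.continuous.mul sw.continuous
  have c2 : Continuous fun x => -(Phi σ L y (m + 1) t x) * wt σ L x := s1.continuous.neg.mul sw.continuous
  have key : (fun x => gC σ L (Phi σ L y m t) x * wt σ L x) =
      fun x => -(Phi σ L y (m + 1) t x) * wt σ L x := by
    refine eq_of_ae_cont c1 c2 (weak_ae c1.locallyIntegrable c2.locallyIntegrable fun ψ hψ => ?_)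
    have hw := hy.weak ψ hψ m t ht
    have e1 : ∫ x, ψ x * rr σ L x * y (m + 1) t x = ∫ x, ψ x * Phi σ L y (m + 1) t x * wt σ L x := by
      refine integral_congr_ae ?_
      filter_upwards [Phi_ae hσ hy hL (m + 1) ht] with x hx
      rw [hx, wt_eq]; ring
    have e2 : ∫ x, gC σ L ψ x * rr σ L x * y m t x = ∫ x, Phi σ L y m t x * gC σ L ψ x * wt σ L x := by
      refine integral_congr_ae ?_
      filter_upwards [Phi_ae hσ hy hL m ht] with x hx
      rw [hx, wt_eq]; ring
    have g := (green_right hσ hL s0 hψ).symm.trans (green_left hσ hL s0 hψ)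
    rw [e1, e2, g] at hw
    have e3 : ∫ x, ψ x * (-(Phi σ L y (m + 1) t x) * wt σ L x) =
        - ∫ x, ψ x * Phi σ L y (m + 1) t x * wt σ L x := by
      rw [← integral_neg]; congr 1; ext x; ring
    rw [e3, hw, neg_neg]
    congr 1; ext x; ring
  ext x
  have := congrFun key x
  exact mul_right_cancel₀ (wt_ne x) this

/-- pointwise gradients of elements of the form domain -/
lemma grad_ae (hσ : 0 < σ) (hL : Sm L) {k : GG d} (hk : k ∈ Kc σ L hL) {u : Eu d → ℂ} (hu : Sm u)
    (h : (k none : Eu d → ℂ) =ᵐ[volume] fun x => rr σ L x * u x) (i : Fin d) :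
    (k (some i) : Eu d → ℂ) =ᵐ[volume] fun x => ((√σ : ℝ) : ℂ) * (rr σ L x * pd i u x) := by
  have sr : Sm (fun x => (rr σ L x : ℂ)) := (rr_sm hL σ).ofReal
  have c : Continuous fun x => ((√σ : ℝ) : ℂ) * (rr σ L x * pd i u x) :=
    continuous_const.mul (sr.continuous.mul (hu.pd i).continuous)
  refine weak_ae ((Lp.memLp (k (some i))).locallyIntegrable (by norm_num)) c.locallyIntegrable ?_
  intro ψ hψ
  have si : Sm (fun x => (rr σ L x : ℂ)⁻¹) := sr.inv fun x => rr_ne x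
  set η : Eu d → ℂ := fun x => ψ x * (rr σ L x : ℂ)⁻¹ with hη
  have tη : Test η := hψ.mul_right si
  have h1 := Kc_weak_grad (σ := σ) hL tη i k hk
  have e1 : ∫ x, η x * rr σ L x * k (some i) x = ∫ x, ψ x * k (some i) x := by
    congr 1; ext x
    have := rr_ne (σ := σ) (L := L) x
    rw [hη]; field_simp
  have tw : Test (fun x => η x * wt σ L x) := tη.mul_right (wt_sm hL σ)
  have e2 : ∫ x, (pd i η x - ((pd i L x : ℝ) : ℂ) / σ * η x) * rr σ L x * k none x =
      ∫ x, u x * pd i (fun x => η x * wt σ L x) x := by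
    refine integral_congr_ae ?_
    filter_upwards [h] with x hx
    rw [hx, pd_mul tη.sm (wt_sm hL σ), pd_wt hL, wt_eq]; ring
  have e3 := ibp_left hu tw i
  rw [e1, e2] at h1
  rw [h1, neg_mul, ← mul_neg, ← e3, ← integral_const_mul]
  congr 1; ext x
  have := rr_ne (σ := σ) (L := L) x
  rw [hη, wt_eq]; field_simp

lemma Y_flow (hσ : 0 < σ) (hL : Sm L) (f : HH d) :
    Flow σ L (fun m t => Y (TT σ L hL) m t f) where
  bd := by
    intro m a ha
    refine ⟨((m : ℝ) / a) ^ m * ‖f‖, fun t ht => ?_⟩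
    have ht0 : 0 < t := ha.trans_le ht
    refine (norm_Y_le (TT_sp hL) m ht0 f).trans ?_
    gcongr
  der := fun m t ht => Y_hasDerivAt (TT_sp hL) m ht f
  weak := fun ψ hψ m t ht => weak_eq hσ hL hψ m ht f

end Glue
end FP

namespace FP

section Fin
variable {d : ℕ} {σ : ℝ} {L : Eu d → ℝ}

lemma gradient_apply (g : Eu d → ℝ) (x : Eu d) (i : Fin d) : (gradient g x) i = pd i g x := by
  have h : ⟪gradient g x, EuclideanSpace.single i (1 : ℝ)⟫ = pd i g x := by
    unfold gradient pd
    exact InnerProductSpace.toDual_symm_apply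
  rw [← h, EuclideanSpace.inner_single_right]
  simp

lemma gradient_norm_sq (g : Eu d → ℝ) (x : Eu d) : ‖gradient g x‖ ^ 2 = ∑ i, pd i g x ^ 2 := by
  rw [EuclideanSpace.norm_sq_eq]
  simp [gradient_apply]

lemma gC_ofReal {g : Eu d → ℝ} (hg : Sm g) (x : Eu d) :
    gC σ L (fun x => ((g x : ℝ) : ℂ)) x = ((generator σ L g x : ℝ) : ℂ) := by
  have h1 : ∀ i, pd i (fun x => ((g x : ℝ) : ℂ)) = fun x => ((pd i g x : ℝ) : ℂ) :=
    fun i => funext fun x => pd_ofReal hg i x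
  have h2 : laplacian g x = ∑ i, pd i (pd i g) x := rfl
  have h3 : ⟪gradient L x, gradient g x⟫ = ∑ i, pd i L x * pd i g x := by
    rw [PiLp.inner_apply]
    simp [gradient_apply, mul_comm]
  unfold gC generator
  rw [h2, h3]
  simp only [h1]
  have h4 : ∀ i, pd i (fun x => ((pd i g x : ℝ) : ℂ)) x = ((pd i (pd i g) x : ℝ) : ℂ) :=
    fun i => pd_ofReal (hg.pd i) i x
  simp only [h4]
  push_cast
  rfl

lemma gC_const_mul (c : ℂ) {f : Eu d → ℂ} (hf : Sm f) (x : Eu d) :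
    gC σ L (fun x => c * f x) x = c * gC σ L f x := by
  have h1 : ∀ i, pd i (fun x => c * f x) = fun x => c * pd i f x :=
    fun i => funext fun x => pd_const_mul hf c i x
  have h4 : ∀ i, pd i (fun x => c * pd i f x) x = c * pd i (pd i f) x :=
    fun i => pd_const_mul (hf.pd i) c i x
  unfold gC
  simp only [h1, h4]
  rw [← Finset.mul_sum, mul_sub, Finset.mul_sum (a := c) (f := fun i => ((pd i L x : ℝ) : ℂ) * pd i f x)]
  congr 1
  · ring
  · refine Finset.sum_congr rfl fun i _ => ?_
    ring

/-- real part of the solution -/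
noncomputable def phi (σ : ℝ) (L : Eu d → ℝ) (y : ℕ → ℝ → HH d) (t : ℝ) (x : Eu d) : ℝ :=
  (Phi σ L y 0 t x).re

lemma Phi_abs {y : ℕ → ℝ → HH d} (hσ : 0 < σ) (hy : Flow σ L y) (hL : Sm L) {t : ℝ}
    (ht : 0 < t) (hp : NN (y 0 t) = y 0 t) (x : Eu d) :
    Phi σ L y 0 t x = ((‖Phi σ L y 0 t x‖ : ℝ) : ℂ) := by
  have c := (Phi_sm hσ hy hL 0 ht).continuous
  have c2 : Continuous fun x => ((‖Phi σ L y 0 t x‖ : ℝ) : ℂ) :=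
    Complex.continuous_ofReal.comp c.norm
  refine congrFun (eq_of_ae_cont c c2 ?_) x
  have h1 := NN_coe (y 0 t)
  rw [hp] at h1
  filter_upwards [h1, Phi_ae hσ hy hL 0 ht] with x h2 h3
  rw [h3, norm_mul, Complex.norm_real, Real.norm_of_nonneg (rr_pos σ L x).le] at h2
  push_cast at h2
  exact mul_left_cancel₀ (rr_ne x) h2

lemma phi_ofReal {y : ℕ → ℝ → HH d} (hσ : 0 < σ) (hy : Flow σ L y) (hL : Sm L) {t : ℝ}
    (ht : 0 < t) (hp : NN (y 0 t) = y 0 t) (x : Eu d) :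
    ((phi σ L y t x : ℝ) : ℂ) = Phi σ L y 0 t x := by
  unfold phi
  rw [Phi_abs hσ hy hL ht hp x, Complex.ofReal_re]

lemma phi_nonneg {y : ℕ → ℝ → HH d} (hσ : 0 < σ) (hy : Flow σ L y) (hL : Sm L) {t : ℝ}
    (ht : 0 < t) (hp : NN (y 0 t) = y 0 t) (x : Eu d) : 0 ≤ phi σ L y t x := by
  unfold phi
  rw [Phi_abs hσ hy hL ht hp x, Complex.ofReal_re]
  exact norm_nonneg _

lemma iter_eq {y : ℕ → ℝ → HH d} (hσ : 0 < σ) (hy : Flow σ L y) (hL : Sm L) {t : ℝ}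
    (ht : 0 < t) (hp : NN (y 0 t) = y 0 t) (m : ℕ) :
    Sm ((generator σ L)^[m] (phi σ L y t)) ∧
      ∀ x, (((generator σ L)^[m] (phi σ L y t) x : ℝ) : ℂ) = (-1) ^ m * Phi σ L y m t x := by
  have sm : ∀ (m : ℕ) (g : Eu d → ℝ), (∀ x, ((g x : ℝ) : ℂ) = (-1) ^ m * Phi σ L y m t x) → Sm g := by
    intro m g hg
    have e : g = fun x => Complex.reCLM ((-1) ^ m * Phi σ L y m t x) := by
      ext x
      rw [← hg x]; simp
    rw [e]
    exact Complex.reCLM.contDiff.comp (contDiff_const.mul (Phi_sm hσ hy hL m ht))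
  induction m with
  | zero =>
    have : ∀ x, (((generator σ L)^[0] (phi σ L y t) x : ℝ) : ℂ) = (-1) ^ 0 * Phi σ L y 0 t x := by
      intro x
      rw [Function.iterate_zero, id, phi_ofReal hσ hy hL ht hp]; simp
    exact ⟨sm 0 _ this, this⟩
  | succ m ih =>
    obtain ⟨h1, h2⟩ := ih
    have : ∀ x, (((generator σ L)^[m + 1] (phi σ L y t) x : ℝ) : ℂ) =
        (-1) ^ (m + 1) * Phi σ L y (m + 1) t x := by
      intro x
      rw [Function.iterate_succ_apply', ← gC_ofReal h1 x, funext h2, gC_const_mul _ (Phi_sm hσ hy hL m ht),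
        Phi_gC hσ hy hL m ht]
      ring
    exact ⟨sm _ _ this, this⟩

lemma norm_sq_int (y : HH d) : Integrable (fun x => ‖y x‖ ^ 2) ∧ ∫ x, ‖y x‖ ^ 2 = ‖y‖ ^ 2 := by
  have h := L2.integrable_inner (𝕜 := ℂ) y y
  have e : ∀ x, inner ℂ (y x) (y x) = ((‖y x‖ ^ 2 : ℝ) : ℂ) := by
    intro x
    rw [inner_self_eq_norm_sq_to_K]; simp
  constructor
  · have := h.re
    refine this.congr (Eventually.of_forall fun x => ?_)
    simp only [e]
    exact RCLike.ofReal_re (K := ℂ) _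
  · have h2 : inner ℂ y y = ((‖y‖ ^ 2 : ℝ) : ℂ) := by
      rw [inner_self_eq_norm_sq_to_K]; simp
    rw [L2.inner_def] at h2
    simp only [e] at h2
    rw [integral_complex_ofReal] at h2
    exact_mod_cast h2

lemma norm_lint (y : HH d) : ∫⁻ x, ENNReal.ofReal (‖y x‖ ^ 2) = ENNReal.ofReal (‖y‖ ^ 2) := by
  obtain ⟨h1, h2⟩ := norm_sq_int y
  rw [← h2, ofReal_integral_eq_lintegral_ofReal h1 (Eventually.of_forall fun x => by positivity)]

lemma lint_sq {y : HH d} {u : Eu d → ℂ} (h : (y : Eu d → ℂ) =ᵐ[volume] fun x => rr σ L x * u x)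
    {g : Eu d → ℝ} (hg : ∀ x, ‖u x‖ = |g x|) :
    ∫⁻ x, ENNReal.ofReal (g x ^ 2 * Real.exp (-L x / σ)) = ENNReal.ofReal (‖y‖ ^ 2) := by
  rw [← norm_lint]
  refine lintegral_congr_ae ?_
  filter_upwards [h] with x hx
  rw [hx, norm_mul, hg, mul_pow, sq_abs, Complex.norm_real, Real.norm_eq_abs, sq_abs, rr_sq, mul_comm]

lemma lint_grad (hσ : 0 < σ) (hL : Sm L) {k : GG d} (hk : k ∈ Kc σ L hL) {g : Eu d → ℝ} (hg : Sm g)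
    (c : ℂ) (hc : ‖c‖ = 1)
    (h : (k none : Eu d → ℂ) =ᵐ[volume] fun x => rr σ L x * (c * (g x : ℂ))) :
    ∫⁻ x, ENNReal.ofReal (‖gradient g x‖ ^ 2 * Real.exp (-L x / σ)) =
      ENNReal.ofReal (σ⁻¹ * ∑ i, ‖k (some i)‖ ^ 2) := by
  have sg : Sm (fun x => ((g x : ℝ) : ℂ)) := Sm.ofReal hg
  have su : Sm (fun x => c * (g x : ℂ)) := contDiff_const.mul sg
  have hgr := fun i => grad_ae hσ hL hk su h i
  have e : ∀ᵐ x, ‖gradient g x‖ ^ 2 * Real.exp (-L x / σ) = σ⁻¹ * ∑ i, ‖k (some i) x‖ ^ 2 := by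
    filter_upwards [ae_all_iff.2 hgr] with x hx
    rw [gradient_norm_sq, Finset.sum_mul, Finset.mul_sum]
    refine Finset.sum_congr rfl fun i _ => ?_
    rw [hx i, pd_const_mul sg, pd_ofReal hg]
    simp only [norm_mul, hc, Complex.norm_real, Real.norm_eq_abs, mul_pow, sq_abs, one_mul]
    rw [Real.sq_sqrt hσ.le, rr_sq]
    field_simp
  have hi : ∀ i, Integrable (fun x => ‖k (some i) x‖ ^ 2) := fun i => (norm_sq_int (k (some i))).1
  have hI : Integrable (fun x => σ⁻¹ * ∑ i, ‖k (some i) x‖ ^ 2) :=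
    (integrable_finsetSum _ fun i _ => hi i).const_mul _
  calc _ = ∫⁻ x, ENNReal.ofReal (σ⁻¹ * ∑ i, ‖k (some i) x‖ ^ 2) := by
        refine lintegral_congr_ae ?_
        filter_upwards [e] with x hx
        rw [hx]
    _ = ENNReal.ofReal (∫ x, σ⁻¹ * ∑ i, ‖k (some i) x‖ ^ 2) :=
        (ofReal_integral_eq_lintegral_ofReal hI (Eventually.of_forall fun x => by positivity)).symm
    _ = _ := by
        rw [integral_const_mul, integral_finsetSum _ fun i _ => hi i]
        congr 2
        exact Finset.sum_congr rfl fun i _ => (norm_sq_int (k (some i))).2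

lemma grad_energy (hL : Sm L) (f : HH d) (m : ℕ) {t : ℝ} (ht : 0 < t) :
    ∃ k ∈ Kc σ L hL, k none = Y (TT σ L hL) m t f ∧
      ∑ i, ‖k (some i)‖ ^ 2 ≤ ((2 * (m : ℝ) + 1) / (2 * t)) ^ (2 * m + 1) * ‖f‖ ^ 2 := by
  set y0 := Y (TT σ L hL) m t f with hy0
  set y1 := Y (TT σ L hL) (m + 1) t f with hy1
  have hr : y0 = TT σ L hL (y0 + y1) := Y_rec (TT_sa hL) (TT_sp hL) m ht f
  refine ⟨kap σ L hL (y0 + y1), kap_mem hL _, ?_, ?_⟩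
  · rw [← TT_apply, ← hr]
  · have h1 := kap_energy (σ := σ) hL (y0 + y1)
    rw [← hr, inner_add_left, Complex.add_re] at h1
    have h2 : (inner ℂ y0 y0).re = ‖y0‖ ^ 2 := by
      rw [inner_self_eq_norm_sq_to_K]; norm_cast
    rw [h2] at h1
    have h3 : (inner ℂ y1 y0).re ≤ ‖inner ℂ y0 y1‖ := by
      rw [norm_inner_symm]; exact Complex.re_le_norm _
    have h4 := inner_Y_le (TT_sp (σ := σ) hL) m ht f
    linarith [h3.trans h4]

/-- the initial datum -/
lemma init_exists {φ₀ : Eu d → ℝ} (hL : Sm L) (hm : Measurable φ₀) (hp : ∀ w, 0 < φ₀ w)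
    (h2 : Integrable (fun w => (φ₀ w) ^ 2 * Real.exp (-L w / σ))) :
    ∃ f : HH d, (f : Eu d → ℂ) =ᵐ[volume] (fun x => (rr σ L x : ℂ) * (φ₀ x : ℂ)) ∧ NN f = f ∧
      ‖f‖ ^ 2 = ∫ w, (φ₀ w) ^ 2 * Real.exp (-L w / σ) := by
  have hmeas : AEStronglyMeasurable (fun x => (rr σ L x : ℂ) * (φ₀ x : ℂ)) volume := by
    refine AEStronglyMeasurable.mul (Sm.ofReal (rr_sm hL σ)).continuous.aestronglyMeasurable ?_
    exact (Complex.measurable_ofReal.comp hm).aestronglyMeasurable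
  have hsq : ∀ x, ‖(rr σ L x : ℂ) * (φ₀ x : ℂ)‖ ^ 2 = (φ₀ x) ^ 2 * Real.exp (-L x / σ) := by
    intro x
    simp only [norm_mul, Complex.norm_real, Real.norm_eq_abs, mul_pow, sq_abs]
    rw [rr_sq, mul_comm]
  have hLp : MemLp (fun x => (rr σ L x : ℂ) * (φ₀ x : ℂ)) 2 volume := by
    rw [memLp_two_iff_integrable_sq_norm hmeas]
    simp only [hsq]
    exact h2
  have hc := hLp.coeFn_toLp
  refine ⟨hLp.toLp _, hc, ?_, ?_⟩
  · apply Lp.ext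
    filter_upwards [NN_coe (hLp.toLp _), hc] with x h1 h3
    rw [h1, h3, norm_mul, Complex.norm_real, Complex.norm_real, Real.norm_of_nonneg (rr_pos σ L x).le,
      Real.norm_of_nonneg (hp x).le]
    push_cast; rfl
  · rw [← (norm_sq_int _).2]
    refine integral_congr_ae ?_
    filter_upwards [hc] with x h3
    rw [h3, hsq]

lemma inner_real (hL : Sm L) {ψ : Eu d → ℝ} (h : Test (fun x => ((ψ x : ℝ) : ℂ))) {y : HH d} {g : Eu d → ℝ}
    (hy : (y : Eu d → ℂ) =ᵐ[volume] fun x => rr σ L x * (g x : ℂ)) :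
    (inner ℂ (emb σ L (fun x => ((ψ x : ℝ) : ℂ))) y).re = ∫ w, g w * ψ w * Real.exp (-L w / σ) := by
  have e : inner ℂ (emb σ L (fun x => ((ψ x : ℝ) : ℂ))) y =
      ((∫ w, g w * ψ w * Real.exp (-L w / σ) : ℝ) : ℂ) := by
    rw [inner_emb hL h, ← integral_complex_ofReal]
    refine integral_congr_ae ?_
    filter_upwards [hy] with x hx
    rw [hx, ← rr_sq]
    simp
    ring
  rw [e, Complex.ofReal_re]

end Fin
end FP

/-- Existence, smoothness and a priori estimates for the Cauchy problem
`∂ₜφ = σΔφ - ⟨∇L, ∇φ⟩` with positive initial datum `φ₀ ∈ L²(π)`, `π = e^{-L/σ}`. -/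
theorem fokker_planck_wellposedness
    (d : ℕ) (L : EuclideanSpace ℝ (Fin d) → ℝ) (hL : ContDiff ℝ (⊤ : ℕ∞) L)
    (σ : ℝ) (hσ : 0 < σ)
    (φ₀ : EuclideanSpace ℝ (Fin d) → ℝ) (hφ₀_meas : Measurable φ₀)
    (hφ₀_pos : ∀ w, 0 < φ₀ w)
    (hφ₀_L2 : Integrable (fun w => (φ₀ w) ^ 2 * Real.exp (-L w / σ))) :
    ∃ φ : ℝ → EuclideanSpace ℝ (Fin d) → ℝ,
      -- joint smoothness on (0,∞) × ℝ^d
      ContDiffOn ℝ (⊤ : ℕ∞) (fun p : ℝ × EuclideanSpace ℝ (Fin d) => φ p.1 p.2)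
        (Set.Ioi (0 : ℝ) ×ˢ Set.univ) ∧
      -- nonnegativity
      (∀ t > (0 : ℝ), ∀ w, 0 ≤ φ t w) ∧
      -- (i) the PDE ∂ₜφ = 𝔏φ
      (∀ t > (0 : ℝ), ∀ w,
        HasDerivAt (fun s => φ s w) (generator σ L (φ t) w) t) ∧
      -- (ii) L²(π) contraction
      (∀ t > (0 : ℝ),
        ∫⁻ w, ENNReal.ofReal ((φ t w) ^ 2 * Real.exp (-L w / σ)) ≤
          ENNReal.ofReal (∫ w, (φ₀ w) ^ 2 * Real.exp (-L w / σ))) ∧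
      -- (iii) gradient decay
      (∀ t > (0 : ℝ),
        ∫⁻ w, ENNReal.ofReal (‖gradient (φ t) w‖ ^ 2 * Real.exp (-L w / σ)) ≤
          ENNReal.ofReal ((1 / (2 * σ * t)) *
            ∫ w, (φ₀ w) ^ 2 * Real.exp (-L w / σ))) ∧
      -- (iv) higher order decay
      (∀ m : ℕ, 1 ≤ m → ∀ t > (0 : ℝ),
        (∫⁻ w, ENNReal.ofReal
            (((generator σ L)^[m] (φ t) w) ^ 2 * Real.exp (-L w / σ)) ≤
          ENNReal.ofReal (((m : ℝ) / t) ^ (2 * m) *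
            ∫ w, (φ₀ w) ^ 2 * Real.exp (-L w / σ))) ∧
        (∫⁻ w, ENNReal.ofReal
            (‖gradient ((generator σ L)^[m] (φ t)) w‖ ^ 2 * Real.exp (-L w / σ)) ≤
          ENNReal.ofReal (σ⁻¹ * ((2 * (m : ℝ) + 1) / (2 * t)) ^ (2 * m + 1) *
            ∫ w, (φ₀ w) ^ 2 * Real.exp (-L w / σ)))) ∧
      -- (v) attainment of the initial datum
      (∀ ψ : EuclideanSpace ℝ (Fin d) → ℝ, ContDiff ℝ (⊤ : ℕ∞) ψ → HasCompactSupport ψ →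
        Tendsto (fun t => ∫ w, φ t w * ψ w * Real.exp (-L w / σ))
          (𝓝[>] (0 : ℝ))
          (𝓝 (∫ w, φ₀ w * ψ w * Real.exp (-L w / σ)))) := by
  obtain ⟨f, hf, hfp, hfn⟩ := FP.init_exists hL hφ₀_meas hφ₀_pos hφ₀_L2
  have hy := FP.Y_flow hσ hL f
  set y : ℕ → ℝ → FP.HH d := fun m t => FP.Y (FP.TT σ L hL) m t f with hydef
  have hp : ∀ t > 0, FP.NN (y 0 t) = y 0 t := fun t ht => FP.Y_pos hL ht hfp
  have hre : ∀ t > 0, ∀ x, ((FP.phi σ L y t x : ℝ) : ℂ) = FP.Phi σ L y 0 t x :=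
    fun t ht x => FP.phi_ofReal hσ hy hL ht (hp t ht) x
  have habs : ∀ m : ℕ, ∀ t > 0, ∀ x,
      ‖FP.Phi σ L y m t x‖ = |(generator σ L)^[m] (FP.phi σ L y t) x| := by
    intro m t ht x
    have := (FP.iter_eq hσ hy hL ht (hp t ht) m).2 x
    rw [← Real.norm_eq_abs, ← Complex.norm_real, this]
    simp
  have hsq : ∀ m : ℕ, ∀ t > 0, ∫⁻ w, ENNReal.ofReal
      (((generator σ L)^[m] (FP.phi σ L y t) w) ^ 2 * Real.exp (-L w / σ)) ≤
        ENNReal.ofReal (((m : ℝ) / t) ^ (2 * m) * ∫ w, (φ₀ w) ^ 2 * Real.exp (-L w / σ)) := by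
    intro m t ht
    rw [FP.lint_sq (FP.Phi_ae hσ hy hL m ht) (habs m t ht), ← hfn]
    refine ENNReal.ofReal_le_ofReal ?_
    have h1 := FP.norm_Y_le (FP.TT_sp (σ := σ) hL) m ht f
    calc ‖y m t‖ ^ 2 ≤ (((m : ℝ) / t) ^ m * ‖f‖) ^ 2 := by
          exact pow_le_pow_left₀ (norm_nonneg _) h1 2
      _ = ((m : ℝ) / t) ^ (2 * m) * ‖f‖ ^ 2 := by ring
  have hgr : ∀ m : ℕ, ∀ t > 0, ∫⁻ w, ENNReal.ofReal
      (‖gradient ((generator σ L)^[m] (FP.phi σ L y t)) w‖ ^ 2 * Real.exp (-L w / σ)) ≤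
        ENNReal.ofReal (σ⁻¹ * ((2 * (m : ℝ) + 1) / (2 * t)) ^ (2 * m + 1) *
          ∫ w, (φ₀ w) ^ 2 * Real.exp (-L w / σ)) := by
    intro m t ht
    obtain ⟨k, hk, hk0, hkb⟩ := FP.grad_energy (σ := σ) hL f m ht
    obtain ⟨hs, he⟩ := FP.iter_eq hσ hy hL ht (hp t ht) m
    have hae : (k none : FP.Eu d → ℂ) =ᵐ[volume] fun x => FP.rr σ L x *
        ((-1) ^ m * (((generator σ L)^[m] (FP.phi σ L y t) x : ℝ) : ℂ)) := by
      rw [hk0]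
      filter_upwards [FP.Phi_ae hσ hy hL m ht] with x hx
      rw [hydef] at hx
      rw [he x, ← mul_assoc ((-1 : ℂ) ^ m), ← mul_pow]
      simpa using hx
    rw [FP.lint_grad hσ hL hk hs ((-1) ^ m) (by simp) hae, ← hfn]
    refine ENNReal.ofReal_le_ofReal ?_
    rw [mul_assoc]
    exact mul_le_mul_of_nonneg_left hkb (by positivity)
  refine ⟨FP.phi σ L y, ?_, ?_, ?_, ?_, ?_, ?_, ?_⟩
  · exact Complex.reCLM.contDiff.comp_contDiffOn (FP.Phi_smooth hσ hy hL 0)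
  · exact fun t ht w => FP.phi_nonneg hσ hy hL ht (hp t ht) w
  · intro t ht w
    have h1 := (Complex.reCLM.hasFDerivAt).comp_hasDerivAt t (FP.Phi_deriv hσ hy hL 0 ht w)
    refine h1.congr_deriv ?_
    have h2 := (FP.iter_eq hσ hy hL ht (hp t ht) 1).2 w
    rw [Function.iterate_one, pow_one, neg_one_mul] at h2
    rw [zero_add, ← h2, Complex.reCLM_apply, Complex.ofReal_re]
  · intro t ht
    simpa using hsq 0 t ht
  · intro t ht
    have h := hgr 0 t ht
    have e : σ⁻¹ * ((2 * ((0 : ℕ) : ℝ) + 1) / (2 * t)) ^ (2 * 0 + 1) = 1 / (2 * σ * t) := by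
      have : t ≠ 0 := ne_of_gt ht
      simp
      field_simp
    rw [e] at h
    exact h
  · exact fun m _ t ht => ⟨hsq m t ht, hgr m t ht⟩
  · intro ψ hψ hψc
    have hT : FP.Test (fun x => ((ψ x : ℝ) : ℂ)) :=
      ⟨FP.Sm.ofReal hψ, hψc.comp_left (g := fun x : ℝ => (x : ℂ)) (by simp)⟩
    have h1 := FP.Y_init (FP.TT_sa hL) (FP.TT_sp hL) f (FP.TT_test hσ hL hT)
    have h2 := (Complex.continuous_re.tendsto _).comp h1
    rw [FP.inner_real hL hT hf] at h2
    refine h2.congr' ?_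
    filter_upwards [self_mem_nhdsWithin] with t ht
    have h3 := FP.Phi_ae hσ hy hL 0 ht
    simp only [← hre t ht] at h3
    exact FP.inner_real hL hT h3
end

section
/- Let L : ℝ^d → ℝ be continuously differentiable, let L* ∈ ℝ with L(w) ≥ L* for all w, suppose the set of global minimizers W* := {w ∈ ℝ^d : L(w) = L*} is nonempty and compact, and suppose the global Polyak–Łojasiewicz inequality holds: there is ℓ₁ > 0 with ℓ₁·(L(w) − L*) ≤ ‖∇L(w)‖² for all w ∈ ℝ^d. Then for every σ > 0 the Gibbs density w ↦ e^{−L(w)/σ} is integrable with respect to Lebesgue measure on ℝ^d. -/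
open MeasureTheory

theorem pl_growth_aux
    (d : ℕ) (L : EuclideanSpace ℝ (Fin d) → ℝ) (hL : ContDiff ℝ 1 L)
    (Lstar : ℝ) (hlow : ∀ w, L w ≥ Lstar) (c : ℝ) (hc : 0 < c)
    (hPL : ∀ w, 16 * c ^ 2 * (L w - Lstar) ≤ ‖gradient L w‖ ^ 2)
    (w0 : EuclideanSpace ℝ (Fin d)) :
    ∃ w1, L w1 = Lstar ∧ c ^ 2 * ‖w1 - w0‖ ^ 2 ≤ L w0 - Lstar := by
  have hcont : Continuous fun w => √(L w - Lstar) + c * ‖w - w0‖ := by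
    have := hL.continuous
    fun_prop
  have htop : Filter.Tendsto (fun w => √(L w - Lstar) + c * ‖w - w0‖)
      (Filter.cocompact (EuclideanSpace ℝ (Fin d))) Filter.atTop := by
    have h1 : Filter.Tendsto (fun w => c * dist w w0)
        (Filter.cocompact (EuclideanSpace ℝ (Fin d))) Filter.atTop :=
      (tendsto_dist_right_cocompact_atTop w0).const_mul_atTop hc
    refine Filter.tendsto_atTop_mono (fun w => ?_) h1
    rw [dist_eq_norm]
    linarith [Real.sqrt_nonneg (L w - Lstar)]
  obtain ⟨w1, hw1⟩ := hcont.exists_forall_le htop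
  have hz : L w1 = Lstar := by
    by_contra hne
    have hpos : 0 < L w1 - Lstar := lt_of_le_of_ne (by linarith [hlow w1])
      (fun h => hne (by linarith))
    set f1 := √(L w1 - Lstar) with hf1
    have hf1pos : 0 < f1 := Real.sqrt_pos.mpr hpos
    have hf1sq : f1 ^ 2 = L w1 - Lstar := Real.sq_sqrt hpos.le
    set G := gradient L w1 with hG
    have hgrad : HasGradientAt L G w1 :=
      ((hL.differentiable one_ne_zero) w1).hasGradientAt
    have hline : HasDerivAt (fun t : ℝ => w1 + t • (-G)) (-G) 0 := by
      simpa using ((hasDerivAt_id (0 : ℝ)).smul_const (-G)).const_add w1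
    have hLd : HasDerivAt (fun t : ℝ => L (w1 + t • (-G))) (-‖G‖ ^ 2) 0 := by
      have h := HasFDerivAt.comp_hasDerivAt_of_eq (0 : ℝ) hgrad.hasFDerivAt hline (by simp)
      simpa [Function.comp_def] using h
    have hsd := (hLd.sub_const Lstar).sqrt (by simpa using hpos.ne')
    have hgd := hsd.add ((hasDerivAt_id (0 : ℝ)).mul_const (c * ‖G‖))
    have hmin : IsLocalMinOn
        ((fun t : ℝ => √(L (w1 + t • (-G)) - Lstar)) + fun t => id t * (c * ‖G‖))
        (Set.Ici 0) 0 := by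
      refine IsMinOn.localize fun t ht => ?_
      have ht' : 0 ≤ t := ht
      have h := hw1 (w1 + t • (-G))
      have h2 : ‖w1 + t • (-G) - w0‖ ≤ ‖w1 - w0‖ + t * ‖G‖ := by
        have : w1 + t • (-G) - w0 = (w1 - w0) + t • (-G) := by abel
        rw [this]
        refine (norm_add_le _ _).trans ?_
        rw [norm_smul, norm_neg, Real.norm_of_nonneg ht']
      have h3 := mul_le_mul_of_nonneg_left h2 hc.le
      simp only [Set.mem_setOf_eq, Pi.add_apply, id, zero_smul, add_zero, zero_mul]
      nlinarith
    have hnn := hmin.hasFDerivWithinAt_nonneg (y := (1 : ℝ))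
      hgd.hasFDerivAt.hasFDerivWithinAt
      (mem_posTangentConeAt_of_segment_subset (by
        intro x hx
        rw [segment_eq_Icc (by norm_num)] at hx
        exact hx.1))
    simp only [zero_smul, add_zero, ← hf1] at hnn
    simp at hnn
    have h4 : ‖G‖ ^ 2 ≤ 2 * f1 * (c * ‖G‖) := by
      have : -‖G‖ ^ 2 / (2 * f1) + c * ‖G‖ = (2 * f1 * (c * ‖G‖) - ‖G‖ ^ 2) / (2 * f1) := by
        field_simp
        ring
      rw [this] at hnn
      have := (le_div_iff₀ (by positivity)).mp hnn
      linarith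
    have h5 := hPL w1
    rw [← hf1sq, ← hG] at h5
    have h6 : (4 * c * f1) ^ 2 ≤ ‖G‖ ^ 2 := by linarith [h5]
    have h7 : 4 * c * f1 ≤ ‖G‖ := by
      exact (sq_le_sq₀ (by positivity) (norm_nonneg _)).mp h6
    have h8 : 0 < c * f1 := by positivity
    nlinarith
  refine ⟨w1, hz, ?_⟩
  have h := hw1 w0
  simp only [hz, sub_self, Real.sqrt_zero, norm_zero, mul_zero, zero_add, add_zero] at h
  rw [← mul_pow, ← Real.sq_sqrt (sub_nonneg.mpr (hlow w0))]
  gcongr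

/-- If `L` is `C¹`, bounded below by `L*`, its set of global minimizers is nonempty and
compact, and `L` satisfies a global Polyak–Łojasiewicz inequality, then the Gibbs density
`e^{-L/σ}` is Lebesgue-integrable for every `σ > 0`. -/
theorem gibbs_integrable_of_compact_minimizers
    (d : ℕ) (L : EuclideanSpace ℝ (Fin d) → ℝ) (hL : ContDiff ℝ 1 L)
    (Lstar : ℝ) (hlow : ∀ w, L w ≥ Lstar)
    (hW_ne : {w : EuclideanSpace ℝ (Fin d) | L w = Lstar}.Nonempty)
    (hW_cpt : IsCompact {w : EuclideanSpace ℝ (Fin d) | L w = Lstar})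
    (ℓ₁ : ℝ) (hℓ₁ : 0 < ℓ₁)
    (hPL : ∀ w, ℓ₁ * (L w - Lstar) ≤ ‖gradient L w‖ ^ 2) :
    ∀ σ > (0 : ℝ), Integrable (fun w => Real.exp (-L w / σ)) := by
  intro σ hσ
  obtain ⟨R, hR⟩ := hW_cpt.isBounded.exists_norm_le
  set c := √ℓ₁ / 4 with hc
  have hcpos : 0 < c := by positivity
  have hc2 : 16 * c ^ 2 = ℓ₁ := by
    rw [hc, div_pow, Real.sq_sqrt hℓ₁.le]; ring
  have hbound : ∀ w, c ^ 2 * (‖w‖ ^ 2 / 2 - R ^ 2) + Lstar ≤ L w := by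
    intro w
    obtain ⟨w1, h1, h2⟩ := pl_growth_aux d L hL Lstar hlow c hcpos (by rwa [hc2]) w
    have h3 := hR w1 h1
    have h4 : ‖w‖ ≤ ‖w1‖ + ‖w1 - w‖ := by
      have := norm_sub_le w1 (w1 - w)
      simpa using this
    have h5 : ‖w‖ ^ 2 / 2 - R ^ 2 ≤ ‖w1 - w‖ ^ 2 := by
      have h6 : ‖w‖ ^ 2 ≤ (R + ‖w1 - w‖) ^ 2 := by
        gcongr
        linarith
      nlinarith [sq_nonneg (R - ‖w1 - w‖)]
    have := mul_le_mul_of_nonneg_left h5 (sq_nonneg c)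
    linarith
  have hint : Integrable (fun w : EuclideanSpace ℝ (Fin d) =>
      Real.exp (-(c ^ 2 / (2 * σ)) * ‖w‖ ^ 2)) := by
    have h := GaussianFourier.integrable_cexp_neg_mul_sq_norm_add
      (V := EuclideanSpace ℝ (Fin d)) (b := ((c ^ 2 / (2 * σ) : ℝ) : ℂ))
      (by rw [Complex.ofReal_re]; positivity) 0 0
    refine h.norm.congr (Filter.Eventually.of_forall fun w => ?_)
    simp only [Complex.norm_exp]
    congr 1
    simp [← Complex.ofReal_pow, ← Complex.ofReal_mul, ← Complex.ofReal_neg, -Complex.ofReal_div]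
  refine (hint.const_mul (Real.exp ((c ^ 2 * R ^ 2 - Lstar) / σ))).mono' ?_ ?_
  · have := hL.continuous
    exact Continuous.aestronglyMeasurable (by fun_prop)
  · refine Filter.Eventually.of_forall fun w => ?_
    rw [Real.norm_of_nonneg (Real.exp_pos _).le, ← Real.exp_add]
    apply Real.exp_le_exp.mpr
    have : (c ^ 2 * R ^ 2 - Lstar) / σ + -(c ^ 2 / (2 * σ)) * ‖w‖ ^ 2
        = (-(c ^ 2 * (‖w‖ ^ 2 / 2 - R ^ 2) + Lstar)) / σ := by
      field_simp
      ring
    rw [this]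
    gcongr
    exact hbound w
end

section
/- Let L : ℝ^d → ℝ be measurable, L* ∈ ℝ, let W* ⊆ ℝ^d be an unbounded set, let H : ℝ → ℝ be continuous, and suppose L(w) − L* ≤ H(dist(w, W*)) for every w ∈ ℝ^d. Then for every σ > 0, the Gibbs density w ↦ e^{−L(w)/σ} is NOT integrable with respect to Lebesgue measure on ℝ^d. -/
open MeasureTheory

/-- If the set `W*` is unbounded and `L - L*` is bounded above by a continuous function
of the distance to `W*`, then the Gibbs density `e^{-L/σ}` is not Lebesgue-integrable. -/
theorem gibbs_not_integrable_of_unbounded_minimizers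
    (d : ℕ) (L : EuclideanSpace ℝ (Fin d) → ℝ) (hLmeas : Measurable L)
    (Lstar : ℝ) (Wstar : Set (EuclideanSpace ℝ (Fin d)))
    (hW_unbdd : ¬ Bornology.IsBounded Wstar)
    (H : ℝ → ℝ) (hH : Continuous H)
    (hgrowth : ∀ w, L w - Lstar ≤ H (Metric.infDist w Wstar)) :
    ∀ σ > (0 : ℝ), ¬ Integrable (fun w => Real.exp (-L w / σ)) := by
  intro σ hσ hint
  obtain ⟨M, hM⟩ := (isCompact_Icc (a := (0:ℝ)) (b := 1)).bddAbove_image hH.continuousOn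
  set c : ℝ := Real.exp (-(M + Lstar) / σ) with hc
  have hcpos : 0 < c := Real.exp_pos _
  set S : Set (EuclideanSpace ℝ (Fin d)) := {w | c ≤ ‖Real.exp (-L w / σ)‖} with hS
  have hSfin : volume S < ⊤ := hint.measure_norm_ge_lt_top hcpos
  have hSmeas : MeasurableSet S := by
    apply measurableSet_le measurable_const
    fun_prop
  have hball : ∀ w ∈ Wstar, Metric.ball w 1 ⊆ S := by
    intro w hw x hx
    have h1 : Metric.infDist x Wstar ≤ 1 :=
      (Metric.infDist_le_dist_of_mem hw).trans (Metric.mem_ball.1 hx).le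
    have h2 : H (Metric.infDist x Wstar) ≤ M :=
      hM ⟨_, ⟨Metric.infDist_nonneg, h1⟩, rfl⟩
    have h3 := hgrowth x
    simp only [hS, Set.mem_setOf_eq, Real.norm_eq_abs, Real.abs_exp, hc]
    apply Real.exp_le_exp.2
    apply div_le_div_of_nonneg_right _ hσ.le
    linarith
  have hlim : Filter.Tendsto (fun n : ℕ => volume (S \ Metric.closedBall 0 (n : ℝ)))
      Filter.atTop (nhds 0) := by
    have h := tendsto_measure_iInter_atTop (μ := volume)
      (s := fun n : ℕ => S \ Metric.closedBall (0 : EuclideanSpace ℝ (Fin d)) (n : ℝ))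
      (fun n => (hSmeas.diff Metric.isClosed_closedBall.measurableSet).nullMeasurableSet)
      (fun m n hmn => Set.diff_subset_diff_right
        (Metric.closedBall_subset_closedBall (by exact_mod_cast hmn)))
      ⟨0, ((measure_mono Set.diff_subset).trans_lt hSfin).ne⟩
    have he : (⋂ n : ℕ, S \ Metric.closedBall (0 : EuclideanSpace ℝ (Fin d)) (n : ℝ)) = ∅ := by
      ext x
      simp only [Set.mem_iInter, Set.mem_empty_iff_false, iff_false]
      intro hx
      obtain ⟨n, hn⟩ := exists_nat_ge ‖x‖
      exact (hx n).2 (by simpa using hn)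
    rw [he, measure_empty] at h
    exact h
  have hpos : 0 < volume (Metric.ball (0 : EuclideanSpace ℝ (Fin d)) 1) :=
    Metric.measure_ball_pos _ _ one_pos
  obtain ⟨n, hn⟩ := (hlim.eventually (gt_mem_nhds hpos)).exists
  apply hW_unbdd
  apply (Metric.isBounded_closedBall (x := (0 : EuclideanSpace ℝ (Fin d))) (r := n + 1)).subset
  intro w hw
  by_contra hwn
  have hwn' : (n : ℝ) + 1 < ‖w‖ := by simpa using hwn
  refine absurd hn (not_lt.2 ?_)
  rw [← Measure.addHaar_ball_center volume w 1]
  apply measure_mono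
  intro x hx
  refine ⟨hball w hw hx, fun hxn => ?_⟩
  have h1 : ‖x‖ ≤ n := by simpa using hxn
  have h2 : dist x w < 1 := hx
  rw [dist_comm, dist_eq_norm] at h2
  have := norm_sub_norm_le w x
  linarith
end
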